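/- If the energy I is κ-uniformly convex, then there exists a unique differential solution of the rate-independent system, i.e. a unique z ∈ W^{1,∞}(0,T;Z) with z(0) = z₀ and 0 ∈ ∂R(z′(t)) + D_zI(t,z(t)) for almost all t ∈ [0,T]. -/

import Mathlib

open MeasureTheory
open scoped RealInnerProductSpace NNReal

noncomputable section

namespace RIS

variable {Z V X : Type*}
  [NormedAddCommGroup Z] [InnerProductSpace ℝ Z] [CompleteSpace Z]
  [NormedAddCommGroup V] [InnerProductSpace ℝ V] [CompleteSpace V]
  [NormedAddCommGroup X] [NormedSpace ℝ X]

/-- The convex subdifferential of `R : V → ℝ` at `u`, as a subset of the dual `V →L[ℝ] ℝ`. -/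
def subdiff (R : V → ℝ) (u : V) : Set (V →L[ℝ] ℝ) :=
  {ξ | ∀ v : V, R u + ξ (v - u) ≤ R v}

/-- The semilinear energy `I(t,z) = ½⟨Az,z⟩ + F(z) − ⟨ℓ(t), z⟩`. -/
def energy (A : Z →L[ℝ] Z →L[ℝ] ℝ) (F : Z → ℝ) (ℓ : ℝ → V →L[ℝ] ℝ)
    (ι : Z →L[ℝ] V) (t : ℝ) (z : Z) : ℝ :=
  (1 / 2 : ℝ) * A z z + F z - ℓ t (ι z)

/-- `D_z I(t,z) = Az + D_zF(z) − ℓ(t)`, as an element of `Z*` (here `D_zF(z)` and `ℓ(t)`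
are elements of `V*`, composed with the embedding `ι : Z ↪ V`). -/
def DI (A : Z →L[ℝ] Z →L[ℝ] ℝ) (DF : Z → V →L[ℝ] ℝ) (ℓ : ℝ → V →L[ℝ] ℝ)
    (ι : Z →L[ℝ] V) (t : ℝ) (z : Z) : Z →L[ℝ] ℝ :=
  A z + (DF z).comp ι - (ℓ t).comp ι

/-- Local stability: `0 ∈ ∂R(0) + D_z I(t,z)`. -/
def LocStable (R : V → ℝ) (A : Z →L[ℝ] Z →L[ℝ] ℝ) (DF : Z → V →L[ℝ] ℝ)
    (ℓ : ℝ → V →L[ℝ] ℝ) (ι : Z →L[ℝ] V) (t : ℝ) (z : Z) : Prop :=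
  ∃ ξ ∈ subdiff R 0, ξ.comp ι + DI A DF ℓ ι t z = 0

/-- The local incremental minimization scheme with step size `τ`:
`z_{k+1}` minimizes `I(t_k, ·) + R(· − z_k)` over the ball `‖· − z_k‖_V ≤ τ`
and `t_{k+1} = min{t_k + τ − ‖z_{k+1} − z_k‖_V, T}`, starting from `t_0 = 0`, `z_0 = z₀`. -/
def Scheme (A : Z →L[ℝ] Z →L[ℝ] ℝ) (F : Z → ℝ) (R : V → ℝ) (ℓ : ℝ → V →L[ℝ] ℝ)
    (ι : Z →L[ℝ] V) (T τ : ℝ) (z₀ : Z) (t : ℕ → ℝ) (z : ℕ → Z) : Prop :=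
  t 0 = 0 ∧ z 0 = z₀ ∧
    ∀ k : ℕ,
      ‖ι (z (k + 1) - z k)‖ ≤ τ ∧
      (∀ w : Z, ‖ι (w - z k)‖ ≤ τ →
        energy A F ℓ ι (t k) (z (k + 1)) + R (ι (z (k + 1) - z k)) ≤
          energy A F ℓ ι (t k) w + R (ι (w - z k))) ∧
      t (k + 1) = min (t k + τ - ‖ι (z (k + 1) - z k)‖) T

/-- Standing assumptions on the data of the rate-independent system. -/
def StandingAssumptions (ι : Z →L[ℝ] V) (ιX : V →L[ℝ] X)
    (A : Z →L[ℝ] Z →L[ℝ] ℝ) (α : ℝ) (F : Z → ℝ) (DF : Z → V →L[ℝ] ℝ)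
    (D2F : Z → Z →L[ℝ] V →L[ℝ] ℝ) (R : V → ℝ) (ℓ : ℝ → V →L[ℝ] ℝ)
    (L T : ℝ) : Prop :=
  Function.Injective (ι : Z → V) ∧ DenseRange (ι : Z → V) ∧ (∀ w : Z, ‖ι w‖ ≤ ‖w‖) ∧
  Function.Injective (ιX : V → X) ∧
  (∀ z w : Z, A z w = A w z) ∧ 0 < α ∧ (∀ w : Z, α * ‖w‖ ^ 2 ≤ A w w) ∧
  (∀ w : Z, 0 ≤ F w) ∧
  (∀ w : Z, HasFDerivAt F ((DF w).comp ι) w) ∧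
  (∀ w : Z, HasFDerivAt DF (D2F w) w) ∧
  (∃ CF q : ℝ, 0 < CF ∧ 1 ≤ q ∧ ∀ w v : Z, ‖D2F w v‖ ≤ CF * (1 + ‖w‖ ^ q) * ‖v‖) ∧
  0 ≤ L ∧ LipschitzOnWith (Real.toNNReal L) ℓ (Set.Icc 0 T) ∧ 0 < T ∧
  ConvexOn ℝ Set.univ R ∧ LowerSemicontinuous R ∧ (∀ v : V, 0 ≤ R v) ∧
  (∀ (c : ℝ) (v : V), 0 ≤ c → R (c • v) = c * R v) ∧
  (∃ ρ₁ ρ₂ : ℝ, 0 < ρ₁ ∧ 0 < ρ₂ ∧ ∀ v : V, ρ₁ * ‖ιX v‖ ≤ R v ∧ R v ≤ ρ₂ * ‖v‖)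

/-- `κ`-uniform convexity of the energy: `⟨D²_zI(t,z)v,v⟩ ≥ κ‖v‖²_Z`, where
`D²_zI(t,z)[v,v] = ⟨Av,v⟩ + ⟨D²F(z)v, v⟩`. -/
def UniformlyConvex (A : Z →L[ℝ] Z →L[ℝ] ℝ) (D2F : Z → Z →L[ℝ] V →L[ℝ] ℝ)
    (ι : Z →L[ℝ] V) (κ : ℝ) : Prop :=
  0 < κ ∧ ∀ w v : Z, κ * ‖v‖ ^ 2 ≤ A v v + D2F w v (ι v)

/-- A differential solution of the rate-independent system: `y ∈ W^{1,1}(0,T;Z)`,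
`y(0) = z₀` and `0 ∈ ∂R(y'(t)) + D_zI(t, y(t))` for a.e. `t ∈ (0,T)`. -/
def IsDiffSol (A : Z →L[ℝ] Z →L[ℝ] ℝ) (DF : Z → V →L[ℝ] ℝ) (ℓ : ℝ → V →L[ℝ] ℝ)
    (R : V → ℝ) (ι : Z →L[ℝ] V) (T : ℝ) (z₀ : Z) (y : ℝ → Z) : Prop :=
  y 0 = z₀ ∧
  ∃ y' : ℝ → Z,
    IntervalIntegrable y' volume 0 T ∧
    (∀ s ∈ Set.Icc (0 : ℝ) T, y s = z₀ + ∫ r in (0 : ℝ)..s, y' r) ∧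
    (∀ᵐ s ∂(volume.restrict (Set.Ioo (0 : ℝ) T)),
      ∃ ξ ∈ subdiff R (ι (y' s)), ξ.comp ι + DI A DF ℓ ι s (y s) = 0)


/-- A differential solution of class `W^{1,∞}(0,T;Z)`: `y(0) = z₀`, `y` has an
essentially bounded integrable derivative `y'` on `(0,T)` with
`y(t) = z₀ + ∫₀ᵗ y'` and `0 ∈ ∂R(y'(t)) + D_zI(t,y(t))` for a.e. `t ∈ (0,T)`. -/
def IsDiffSolW1inf (A : Z →L[ℝ] Z →L[ℝ] ℝ) (DF : Z → V →L[ℝ] ℝ) (ℓ : ℝ → V →L[ℝ] ℝ)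
    (R : V → ℝ) (ι : Z →L[ℝ] V) (T : ℝ) (z₀ : Z) (y : ℝ → Z) : Prop :=
  y 0 = z₀ ∧
  ∃ y' : ℝ → Z,
    (∃ Cb : ℝ, ∀ᵐ s ∂(volume.restrict (Set.Ioo (0 : ℝ) T)), ‖y' s‖ ≤ Cb) ∧
    IntervalIntegrable y' volume 0 T ∧
    (∀ s ∈ Set.Icc (0 : ℝ) T, y s = z₀ + ∫ r in (0 : ℝ)..s, y' r) ∧
    (∀ᵐ s ∂(volume.restrict (Set.Ioo (0 : ℝ) T)),
      ∃ ξ ∈ subdiff R (ι (y' s)), ξ.comp ι + DI A DF ℓ ι s (y s) = 0)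

set_option linter.unusedSectionVars false

section Abstract
open Set Filter Topology

variable {W : Type*} [NormedAddCommGroup W] [InnerProductSpace ℝ W] [CompleteSpace W]

/-- Abstract form of the data, entirely in the space `Z`. -/
structure Setup (E : W → ℝ) (G : W → W →L[ℝ] ℝ) (H : W → W →L[ℝ] W →L[ℝ] ℝ)
    (lam : ℝ → W →L[ℝ] ℝ) (Ps : W → ℝ) (κ L T ρ : ℝ) : Prop where
  hE : ∀ z, HasFDerivAt E (G z) z
  hG : ∀ z, HasFDerivAt G (H z) z
  hκ : 0 < κ
  hconv : ∀ z v, κ * ‖v‖ ^ 2 ≤ H z v v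
  hLip : ∀ r : ℝ, 0 < r → ∃ C : ℝ, 0 ≤ C ∧ ∀ a b, ‖a‖ ≤ r → ‖b‖ ≤ r → ‖H a - H b‖ ≤ C * ‖a - b‖
  hL : 0 ≤ L
  hlam : ∀ s ∈ Icc (0 : ℝ) T, ∀ t ∈ Icc (0 : ℝ) T, ‖lam s - lam t‖ ≤ L * |s - t|
  hT : 0 < T
  P_add : ∀ u v, Ps (u + v) ≤ Ps u + Ps v
  P_smul : ∀ (c : ℝ) v, 0 ≤ c → Ps (c • v) = c * Ps v
  P_nonneg : ∀ v, 0 ≤ Ps v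
  hρ : 0 ≤ ρ
  P_le : ∀ v, Ps v ≤ ρ * ‖v‖

/-- Approximate solutions in derivative-free form. -/
structure ASol (G : W → W →L[ℝ] ℝ) (lam : ℝ → W →L[ℝ] ℝ) (Ps : W → ℝ) (T : ℝ) (z₀ : W)
    (M C ε : ℝ) (y : ℝ → W) : Prop where
  init : y 0 = z₀
  lip : ∀ a ∈ Icc (0 : ℝ) T, ∀ b ∈ Icc (0 : ℝ) T, ‖y a - y b‖ ≤ M * |a - b|
  stab : ∀ a ∈ Icc (0 : ℝ) T, ∀ v, (lam a - G (y a)) v ≤ Ps v + ε * ‖v‖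
  en : ∀ a ∈ Icc (0 : ℝ) T, ∀ b ∈ Icc (0 : ℝ) T, a ≤ b →
    Ps (y b - y a) ≤ (lam a - G (y a)) (y b - y a) + C * (b - a) ^ 2 + ε * (b - a)

variable {E : W → ℝ} {G : W → W →L[ℝ] ℝ} {H : W → W →L[ℝ] W →L[ℝ] ℝ}
    {lam : ℝ → W →L[ℝ] ℝ} {Ps : W → ℝ} {κ L T ρ : ℝ}

lemma Setup.symm (S : Setup E G H lam Ps κ L T ρ) (z u v : W) : H z u v = H z v u :=
  second_derivative_symmetric S.hE (S.hG z) u v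

lemma Setup.P_zero (S : Setup E G H lam Ps κ L T ρ) : Ps 0 = 0 := by
  simpa using S.P_smul 0 0 le_rfl

lemma Setup.P_lip (S : Setup E G H lam Ps κ L T ρ) (u v : W) : |Ps u - Ps v| ≤ ρ * ‖u - v‖ := by
  have h1 := S.P_add (u - v) v
  have h2 := S.P_add (v - u) u
  have h3 := S.P_le (u - v)
  have h4 := S.P_le (v - u)
  rw [norm_sub_rev] at h4
  simp only [sub_add_cancel] at h1 h2
  rw [abs_le]; constructor <;> linarith

lemma Setup.P_cont (S : Setup E G H lam Ps κ L T ρ) : Continuous Ps := by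
  have : LipschitzWith ⟨ρ, S.hρ⟩ Ps := LipschitzWith.of_dist_le_mul fun u v => by
    rw [Real.dist_eq, dist_eq_norm]; exact S.P_lip u v
  exact this.continuous

lemma Setup.G_cont (S : Setup E G H lam Ps κ L T ρ) : Continuous G :=
  continuous_iff_continuousAt.2 fun z => (S.hG z).continuousAt

lemma Setup.mono (S : Setup E G H lam Ps κ L T ρ) (a b : W) :
    κ * ‖a - b‖ ^ 2 ≤ (G a - G b) (a - b) := by
  set w := a - b with hw
  have hd : ∀ s : ℝ, HasDerivAt (fun s : ℝ => G (b + s • w) w) (H (b + s • w) w w) s := by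
    intro s
    have h1 : HasDerivAt (fun s : ℝ => b + s • w) w s := by
      simpa using ((hasDerivAt_id s).smul_const w).const_add b
    have h2 := (S.hG (b + s • w)).comp_hasDerivAt s h1
    have h3 := h2.clm_apply (hasDerivAt_const s w)
    simpa using h3
  have hcont : ContinuousOn (fun s : ℝ => G (b + s • w) w) (Icc 0 1) :=
    fun s _ => (hd s).continuousAt.continuousWithinAt
  obtain ⟨c, -, hc⟩ := exists_hasDerivAt_eq_slope _ _ zero_lt_one hcont (fun s _ => hd s)
  have := S.hconv (b + c • w) w
  rw [hc] at this
  simpa [hw] using this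

lemma Setup.strong (S : Setup E G H lam Ps κ L T ρ) (a b : W) :
    E b + G b (a - b) + κ / 2 * ‖a - b‖ ^ 2 ≤ E a := by
  set w := a - b with hw
  have hd : ∀ s : ℝ, HasDerivAt (fun s : ℝ => E (b + s • w) - s * G b w - κ / 2 * ‖w‖ ^ 2 * s ^ 2)
      (G (b + s • w) w - G b w - κ * ‖w‖ ^ 2 * s) s := by
    intro s
    have h1 : HasDerivAt (fun s : ℝ => b + s • w) w s := by
      simpa using ((hasDerivAt_id s).smul_const w).const_add b
    have h2 := (S.hE (b + s • w)).comp_hasDerivAt s h1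
    have h3 := (h2.sub ((hasDerivAt_id s).mul_const (G b w))).sub
      ((hasDerivAt_pow 2 s).const_mul (κ / 2 * ‖w‖ ^ 2))
    refine h3.congr_deriv ?_
    simp; ring
  have hmono : MonotoneOn (fun s : ℝ => E (b + s • w) - s * G b w - κ / 2 * ‖w‖ ^ 2 * s ^ 2)
      (Icc 0 1) := by
    refine monotoneOn_of_deriv_nonneg (convex_Icc 0 1)
      (fun s _ => (hd s).continuousAt.continuousWithinAt)
      (fun s _ => (hd s).differentiableAt.differentiableWithinAt) ?_
    intro s hs
    rw [interior_Icc] at hs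
    rw [(hd s).deriv]
    have := S.mono (b + s • w) b
    simp only [add_sub_cancel_left, map_smul, sub_apply, norm_smul,
      Real.norm_eq_abs, abs_of_pos hs.1, smul_eq_mul] at this
    have h4 : s * (κ * ‖w‖ ^ 2 * s) ≤ s * (G (b + s • w) w - G b w) := by nlinarith
    have := le_of_mul_le_mul_left h4 hs.1
    linarith
  have := hmono (left_mem_Icc.2 zero_le_one) (right_mem_Icc.2 zero_le_one) zero_le_one
  simp [hw] at this
  simp only [hw]
  simp
  linarith

lemma Setup.taylor (S : Setup E G H lam Ps κ L T ρ) (r : ℝ) (hr : 0 < r) :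
    ∃ C : ℝ, 0 ≤ C ∧ ∀ a b, ‖a‖ ≤ r → ‖b‖ ≤ r →
      ‖G a - G b - H b (a - b)‖ ≤ C * ‖a - b‖ ^ 2 ∧ ‖G a - G b‖ ≤ C * ‖a - b‖ ∧ ‖H a‖ ≤ C := by
  obtain ⟨C, hC, h⟩ := S.hLip r hr
  have hH : ∀ a, ‖a‖ ≤ r → ‖H a‖ ≤ ‖H 0‖ + C * r := by
    intro a ha
    have h1 := h a 0 ha (by simpa using hr.le)
    have h2 : ‖H a‖ ≤ ‖H a - H 0‖ + ‖H 0‖ := by linarith [norm_sub_norm_le (H a) (H 0)]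
    have h3 : C * ‖a - 0‖ ≤ C * r := by
      rw [sub_zero]; exact mul_le_mul_of_nonneg_left ha hC
    linarith
  refine ⟨‖H 0‖ + C * r + C, by positivity, fun a b ha hb => ⟨?_, ?_, ?_⟩⟩
  · have hseg : ∀ x ∈ segment ℝ b a, ‖H x - H b‖ ≤ C * ‖a - b‖ := by
      intro x hx
      have hxr : ‖x‖ ≤ r := by
        have : segment ℝ b a ⊆ Metric.closedBall 0 r :=
          (convex_closedBall (0 : W) r).segment_subset (by simpa using hb) (by simpa using ha)
        simpa using this hx
      refine (h x b hxr hb).trans (mul_le_mul_of_nonneg_left ?_ hC)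
      obtain ⟨s, hs, rfl⟩ := (segment_eq_image' ℝ b a) ▸ hx
      simp only [add_sub_cancel_left, norm_smul, Real.norm_eq_abs, abs_of_nonneg hs.1]
      exact mul_le_of_le_one_left (norm_nonneg _) hs.2
    have := (convex_segment b a).norm_image_sub_le_of_norm_hasFDerivWithin_le'
      (fun x _ => (S.hG x).hasFDerivWithinAt) hseg (left_mem_segment ℝ b a)
      (right_mem_segment ℝ b a)
    refine this.trans ?_
    have : 0 ≤ ‖H 0‖ + C * r := by positivity
    nlinarith [sq_nonneg ‖a - b‖]
  · have := (convex_closedBall (0 : W) r).norm_image_sub_le_of_norm_hasFDerivWithin_le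
      (fun x _ => (S.hG x).hasFDerivWithinAt) (C := ‖H 0‖ + C * r)
      (fun x hx => hH x (by simpa using hx)) (x := b) (y := a) (by simpa using hb)
      (by simpa using ha)
    refine this.trans ?_
    nlinarith [norm_nonneg (a - b)]
  · linarith [hH a ha]

lemma dini {f : ℝ → ℝ} {a b K ε δ : ℝ} (hf : ContinuousOn f (Icc a b)) (ha : f a ≤ δ)
    (h : ∀ x ∈ Ico a b, ∃ C : ℝ, ∀ᶠ z in 𝓝[>] x,
      f z - f x ≤ (K * f x + ε) * (z - x) + C * (z - x) ^ 2) :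
    ∀ x ∈ Icc a b, f x ≤ gronwallBound δ K ε (x - a) := by
  refine le_gronwallBound_of_liminf_deriv_right_le (f' := fun x => K * f x + ε) hf ?_ ha
    (fun x _ => le_rfl)
  intro x hx r hr
  obtain ⟨C, hC⟩ := h x hx
  have hlim : Tendsto (fun z => K * f x + ε + C * (z - x)) (𝓝[>] x) (𝓝 (K * f x + ε)) := by
    have : ContinuousAt (fun z => K * f x + ε + C * (z - x)) x := by fun_prop
    have := this.tendsto
    simp only [sub_self, mul_zero, add_zero] at this
    exact this.mono_left nhdsWithin_le_nhds
  refine Eventually.frequently ?_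
  filter_upwards [hC, hlim.eventually_lt_const hr, self_mem_nhdsWithin] with z h1 h2 h3
  have h3' : 0 < z - x := sub_pos.2 h3
  refine lt_of_le_of_lt ?_ h2
  rw [inv_mul_le_iff₀ h3']
  nlinarith

lemma ASol.cont {z₀ : W} {M C ε : ℝ} {y : ℝ → W} (h : ASol G lam Ps T z₀ M C ε y) :
    ContinuousOn y (Icc 0 T) := by
  have : LipschitzOnWith (Real.toNNReal M) y (Icc 0 T) :=
    LipschitzOnWith.of_dist_le_mul fun a ha b hb => by
      rw [dist_eq_norm, Real.dist_eq]
      exact (h.lip a ha b hb).trans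
        (mul_le_mul_of_nonneg_right (Real.le_coe_toNNReal M) (abs_nonneg _))
  exact this.continuousOn

lemma ASol.bound {z₀ : W} {M C ε : ℝ} {y : ℝ → W} (h : ASol G lam Ps T z₀ M C ε y)
    (hM : 0 ≤ M) (hT : 0 < T) :
    ∀ s ∈ Icc (0 : ℝ) T, ‖y s‖ ≤ ‖z₀‖ + M * T + 1 := by
  intro s hs
  have h1 := h.lip s hs 0 (left_mem_Icc.2 hT.le)
  rw [h.init, sub_zero, abs_of_nonneg hs.1] at h1
  have h2 := norm_sub_norm_le (y s) z₀
  have := mul_le_mul_of_nonneg_left hs.2 hM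
  linarith

lemma Setup.core (S : Setup E G H lam Ps κ L T ρ) {r Q : ℝ} (hQ0 : 0 ≤ Q)
    (hQ : ∀ a b, ‖a‖ ≤ r → ‖b‖ ≤ r →
      ‖G a - G b - H b (a - b)‖ ≤ Q * ‖a - b‖ ^ 2 ∧ ‖G a - G b‖ ≤ Q * ‖a - b‖ ∧ ‖H a‖ ≤ Q)
    {x1 x2 y1 y2 : W} (hx1 : ‖x1‖ ≤ r) (hx2 : ‖x2‖ ≤ r) (hy1 : ‖y1‖ ≤ r) (hy2 : ‖y2‖ ≤ r)
    {m : ℝ} (hm : 0 ≤ m) (h1 : ‖y1 - x1‖ ≤ m) (h2 : ‖y2 - x2‖ ≤ m) :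
    (G y1 - G y2) (y1 - y2) - (G x1 - G x2) (x1 - x2) ≤
      2 * (G x1 - G x2) ((y1 - x1) - (y2 - x2)) + 2 * Q * m * ‖x1 - x2‖ ^ 2
        + (4 * Q + 4 * Q * r) * m ^ 2 := by
  have hr : 0 ≤ r := (norm_nonneg _).trans hx1
  set d1 := y1 - x1 with hd1
  set d2 := y2 - x2 with hd2
  set w := x1 - x2 with hw
  set e1 := G y1 - G x1 - H x1 d1 with he1
  set e2 := G y2 - G x2 - H x2 d2 with he2
  set p1 := G x2 - G x1 - H x1 (x2 - x1) with hp1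
  set p2 := G x1 - G x2 - H x2 w with hp2
  have key : (G y1 - G y2) (y1 - y2) - (G x1 - G x2) w =
      2 * (G x1 - G x2) (d1 - d2) + (p1 d1 + p2 d2) + (H x1 d1 - H x2 d2) (d1 - d2)
        + (e1 - e2) (y1 - y2) := by
    have s1 := S.symm x1 d1 x1
    have s2 := S.symm x1 d1 x2
    have s3 := S.symm x2 d2 x1
    have s4 := S.symm x2 d2 x2
    have hyy : y1 - y2 = w + (d1 - d2) := by simp only [hw, hd1, hd2]; abel
    rw [hyy]
    simp only [he1, he2, hp1, hp2, hw, sub_apply, map_sub, map_add]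
    rw [s1, s2, s3, s4]
    ring
  have b1 : p1 d1 ≤ Q * ‖w‖ ^ 2 * m := by
    have := (hQ x2 x1 hx2 hx1).1
    rw [norm_sub_rev x2 x1] at this
    calc p1 d1 ≤ ‖p1 d1‖ := Real.le_norm_self _
      _ ≤ ‖p1‖ * ‖d1‖ := p1.le_opNorm _
      _ ≤ _ := mul_le_mul this h1 (norm_nonneg _) (by positivity)
  have b2 : p2 d2 ≤ Q * ‖w‖ ^ 2 * m := by
    have := (hQ x1 x2 hx1 hx2).1
    calc p2 d2 ≤ ‖p2 d2‖ := Real.le_norm_self _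
      _ ≤ ‖p2‖ * ‖d2‖ := p2.le_opNorm _
      _ ≤ _ := mul_le_mul this h2 (norm_nonneg _) (by positivity)
  have hH1 : ‖H x1 d1‖ ≤ Q * m := ((H x1).le_opNorm _).trans
    (mul_le_mul (hQ x1 x1 hx1 hx1).2.2 h1 (norm_nonneg _) hQ0)
  have hH2 : ‖H x2 d2‖ ≤ Q * m := ((H x2).le_opNorm _).trans
    (mul_le_mul (hQ x2 x2 hx2 hx2).2.2 h2 (norm_nonneg _) hQ0)
  have b3 : (H x1 d1 - H x2 d2) (d1 - d2) ≤ (Q * m + Q * m) * (m + m) := by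
    calc (H x1 d1 - H x2 d2) (d1 - d2) ≤ ‖(H x1 d1 - H x2 d2) (d1 - d2)‖ := Real.le_norm_self _
      _ ≤ ‖H x1 d1 - H x2 d2‖ * ‖d1 - d2‖ := ContinuousLinearMap.le_opNorm _ _
      _ ≤ _ := mul_le_mul ((norm_sub_le _ _).trans (add_le_add hH1 hH2))
        ((norm_sub_le _ _).trans (add_le_add h1 h2)) (norm_nonneg _) (by positivity)
  have he1' : ‖e1‖ ≤ Q * m ^ 2 := (hQ y1 x1 hy1 hx1).1.trans (by gcongr)
  have he2' : ‖e2‖ ≤ Q * m ^ 2 := (hQ y2 x2 hy2 hx2).1.trans (by gcongr)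
  have b4 : (e1 - e2) (y1 - y2) ≤ (Q * m ^ 2 + Q * m ^ 2) * (r + r) := by
    calc (e1 - e2) (y1 - y2) ≤ ‖(e1 - e2) (y1 - y2)‖ := Real.le_norm_self _
      _ ≤ ‖e1 - e2‖ * ‖y1 - y2‖ := ContinuousLinearMap.le_opNorm _ _
      _ ≤ _ := mul_le_mul ((norm_sub_le _ _).trans (add_le_add he1' he2'))
        ((norm_sub_le _ _).trans (add_le_add hy1 hy2)) (norm_nonneg _) (by positivity)
  rw [key]
  linarith

lemma Setup.compare (S : Setup E G H lam Ps κ L T ρ) (z₀ : W) {M C : ℝ} (hM : 0 ≤ M) :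
    ∃ K : ℝ, 0 ≤ K ∧ ∀ ε1 ε2 : ℝ, 0 ≤ ε1 → 0 ≤ ε2 → ∀ y1 y2 : ℝ → W,
      ASol G lam Ps T z₀ M C ε1 y1 → ASol G lam Ps T z₀ M C ε2 y2 →
      ∀ s ∈ Icc (0 : ℝ) T, ‖y1 s - y2 s‖ ^ 2 ≤ K * (ε1 + ε2) := by
  have hT := S.hT
  have hκ := S.hκ
  set r := ‖z₀‖ + M * T + 1 with hr
  have hr0 : 0 < r := by positivity
  obtain ⟨Q, hQ0, hQ⟩ := S.taylor r hr0
  set k := 2 * Q * M / κ with hk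
  have hk0 : 0 ≤ k := by positivity
  have hgb0 : 0 ≤ gronwallBound 0 k 1 T := by
    have := gronwallBound_mono (δ := 0) (K := k) (ε := 1) le_rfl zero_le_one hk0 hT.le
    simpa [gronwallBound_x0] using this
  refine ⟨κ⁻¹ * (2 * (M + 1)) * gronwallBound 0 k 1 T, by positivity, ?_⟩
  intro ε1 ε2 hε1 hε2 y1 y2 H1 H2 s hs
  set g : ℝ → ℝ := fun s => (G (y1 s) - G (y2 s)) (y1 s - y2 s) with hg
  have hcont : ContinuousOn g (Icc 0 T) := by
    have c1 := S.G_cont.comp_continuousOn H1.cont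
    have c2 := S.G_cont.comp_continuousOn H2.cont
    exact (c1.sub c2).clm_apply (H1.cont.sub H2.cont)
  have main := dini (f := g) (a := 0) (b := T) (K := k) (ε := 2 * (M + 1) * (ε1 + ε2)) (δ := 0)
    hcont (by simp [hg, H1.init, H2.init]) ?_ s hs
  · have e1 : gronwallBound 0 k (2 * (M + 1) * (ε1 + ε2)) (s - 0) =
        2 * (M + 1) * (ε1 + ε2) * gronwallBound 0 k 1 s := by
      unfold gronwallBound
      split_ifs <;> simp <;> ring
    have e2 : gronwallBound 0 k 1 s ≤ gronwallBound 0 k 1 T :=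
      gronwallBound_mono le_rfl zero_le_one hk0 hs.2
    have e3 := S.mono (y1 s) (y2 s)
    have e4 : κ * ‖y1 s - y2 s‖ ^ 2 ≤ 2 * (M + 1) * (ε1 + ε2) * gronwallBound 0 k 1 T := by
      refine (e3.trans (main.trans e1.le)).trans (mul_le_mul_of_nonneg_left e2 (by positivity))
    calc ‖y1 s - y2 s‖ ^ 2 = κ⁻¹ * (κ * ‖y1 s - y2 s‖ ^ 2) := by field_simp
      _ ≤ κ⁻¹ * (2 * (M + 1) * (ε1 + ε2) * gronwallBound 0 k 1 T) := by gcongr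
      _ = _ := by ring
  · intro a ha
    have ha' : a ∈ Icc 0 T := ⟨ha.1, ha.2.le⟩
    refine ⟨4 * C + (4 * Q + 4 * Q * r) * M ^ 2, ?_⟩
    filter_upwards [Ioo_mem_nhdsGT ha.2] with b hb
    have hb' : b ∈ Icc 0 T := ⟨ha.1.trans hb.1.le, hb.2.le⟩
    have hh : 0 < b - a := sub_pos.2 hb.1
    have l1 := H1.lip b hb' a ha'
    have l2 := H2.lip b hb' a ha'
    rw [abs_of_pos hh] at l1 l2
    have core := S.core hQ0 hQ (H1.bound hM hT a ha') (H2.bound hM hT a ha')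
      (H1.bound hM hT b hb') (H2.bound hM hT b hb') (by positivity) l1 l2
    have n1 := H1.en a ha' b hb' hb.1.le
    have n2 := H2.en a ha' b hb' hb.1.le
    have t1 := H1.stab a ha' (y2 b - y2 a)
    have t2 := H2.stab a ha' (y1 b - y1 a)
    have q1 : ε1 * ‖y2 b - y2 a‖ ≤ ε1 * (M * (b - a)) := by gcongr
    have q2 : ε2 * ‖y1 b - y1 a‖ ≤ ε2 * (M * (b - a)) := by gcongr
    have hw := S.mono (y1 a) (y2 a)
    have hw' : 2 * Q * (M * (b - a)) * ‖y1 a - y2 a‖ ^ 2 ≤ k * g a * (b - a) := by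
      have : ‖y1 a - y2 a‖ ^ 2 ≤ g a / κ := by rw [le_div_iff₀ hκ]; linarith
      calc 2 * Q * (M * (b - a)) * ‖y1 a - y2 a‖ ^ 2 ≤ 2 * Q * (M * (b - a)) * (g a / κ) := by
            gcongr
        _ = _ := by rw [hk]; field_simp
    have dis : (G (y1 a) - G (y2 a)) ((y1 b - y1 a) - (y2 b - y2 a)) ≤
        (M + 1) * (ε1 + ε2) * (b - a) + 2 * C * (b - a) ^ 2 := by
      simp only [sub_apply, map_sub] at n1 n2 t1 t2 ⊢
      linarith
    have : g b - g a = (G (y1 b) - G (y2 b)) (y1 b - y2 b) - (G (y1 a) - G (y2 a)) (y1 a - y2 a) :=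
      rfl
    rw [this]
    refine core.trans ?_
    nlinarith

lemma Setup.step (S : Setup E G H lam Ps κ L T ρ) (t : ℝ) (z : W) :
    ∃ z' : W, (∀ v, (lam t - G z') v ≤ Ps v) ∧ (lam t - G z') (z' - z) = Ps (z' - z) := by
  have hκ := S.hκ
  set J : W → ℝ := fun x => E x - lam t x + Ps (x - z) with hJ
  have hEc : Continuous E := continuous_iff_continuousAt.2 fun z => (S.hE z).continuousAt
  have hJc : Continuous J := by
    have := S.P_cont
    fun_prop
  have hmid : ∀ a b, 2 * J ((1 / 2 : ℝ) • (a + b)) + κ / 4 * ‖a - b‖ ^ 2 ≤ J a + J b := by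
    intro a b
    set m := (1 / 2 : ℝ) • (a + b) with hm
    have s1 := S.strong a m
    have s2 := S.strong b m
    have ea : a - m = (1 / 2 : ℝ) • (a - b) := by rw [hm]; module
    have eb : b - m = -((1 / 2 : ℝ) • (a - b)) := by rw [hm]; module
    rw [ea] at s1
    rw [eb, norm_neg, map_neg] at s2
    rw [norm_smul] at s1 s2
    have hn : ‖(1 / 2 : ℝ)‖ = 1 / 2 := by norm_num
    rw [hn] at s1 s2
    have p : 2 * Ps (m - z) ≤ Ps (a - z) + Ps (b - z) := by
      have p1 := S.P_add (a - z) (b - z)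
      have p2 := S.P_smul 2 (m - z) (by norm_num)
      have : (2 : ℝ) • (m - z) = (a - z) + (b - z) := by rw [hm]; module
      rw [this] at p2
      linarith
    have hl : 2 * lam t m = lam t a + lam t b := by
      rw [hm]; simp; ring
    simp only [hJ]
    nlinarith
  have hbdd : BddBelow (range J) := by
    refine ⟨E 0 - (‖G 0‖ + ‖lam t‖) ^ 2 / (2 * κ), ?_⟩
    rintro _ ⟨x, rfl⟩
    have s1 := S.strong x 0
    rw [sub_zero] at s1
    have g1 := (abs_le.1 ((G 0).le_opNorm x)).1
    have g2 := (abs_le.1 ((lam t).le_opNorm x)).2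
    have g3 := S.P_nonneg (x - z)
    simp only [hJ]
    set c := ‖G 0‖ + ‖lam t‖
    have : c * ‖x‖ ≤ κ / 2 * ‖x‖ ^ 2 + c ^ 2 / (2 * κ) := by
      rw [← sub_nonneg]
      have : κ / 2 * ‖x‖ ^ 2 + c ^ 2 / (2 * κ) - c * ‖x‖ = (κ * ‖x‖ - c) ^ 2 / (2 * κ) := by
        field_simp; ring
      rw [this]; positivity
    have : c * ‖x‖ = ‖G 0‖ * ‖x‖ + ‖lam t‖ * ‖x‖ := by ring
    linarith
  set m := sInf (range J) with hm
  have hlow : ∀ x, m ≤ J x := fun x => csInf_le hbdd (mem_range_self x)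
  have hseq : ∀ n : ℕ, ∃ x, J x < m + 1 / (n + 1 : ℝ) := by
    intro n
    obtain ⟨_, ⟨x, rfl⟩, hx⟩ := exists_lt_of_csInf_lt (range_nonempty J)
      (show sInf (range J) < m + 1 / (n + 1 : ℝ) by
        have : (0 : ℝ) < 1 / (n + 1 : ℝ) := by positivity
        linarith)
    exact ⟨x, hx⟩
  choose x hx using hseq
  have hlim0 : Tendsto (fun n : ℕ => 1 / ((n : ℝ) + 1)) atTop (𝓝 0) :=
    tendsto_one_div_add_atTop_nhds_zero_nat
  have hcau : CauchySeq x := by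
    refine cauchySeq_of_le_tendsto_0 (fun N : ℕ => Real.sqrt (8 / κ * (1 / ((N : ℝ) + 1)))) ?_ ?_
    · intro n k N hn hk
      rw [dist_eq_norm]
      apply Real.le_sqrt_of_sq_le
      have h1 := hmid (x n) (x k)
      have h2 := hlow ((1 / 2 : ℝ) • (x n + x k))
      have h3 : 1 / ((n : ℝ) + 1) ≤ 1 / ((N : ℝ) + 1) := by gcongr
      have h4 : 1 / ((k : ℝ) + 1) ≤ 1 / ((N : ℝ) + 1) := by gcongr
      have h5 : κ / 4 * ‖x n - x k‖ ^ 2 ≤ 2 * (1 / ((N : ℝ) + 1)) := by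
        linarith [hx n, hx k]
      calc ‖x n - x k‖ ^ 2 = 4 / κ * (κ / 4 * ‖x n - x k‖ ^ 2) := by field_simp
        _ ≤ 4 / κ * (2 * (1 / ((N : ℝ) + 1))) := by gcongr
        _ = _ := by ring
    · have := (hlim0.const_mul (8 / κ)).sqrt
      simpa using this
  obtain ⟨z', hz'⟩ := cauchySeq_tendsto_of_complete hcau
  have hJz : J z' ≤ m := by
    have h1 : Tendsto (fun n => J (x n)) atTop (𝓝 (J z')) := (hJc.tendsto z').comp hz'
    have h2 : Tendsto (fun n : ℕ => m + 1 / ((n : ℝ) + 1)) atTop (𝓝 (m + 0)) := hlim0.const_add m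
    rw [add_zero] at h2
    exact le_of_tendsto_of_tendsto' h1 h2 fun n => (hx n).le
  have hmin : ∀ x, J z' ≤ J x := fun x => hJz.trans (hlow x)
  set d := z' - z with hd
  have hvar : ∀ u, (lam t - G z') (u - d) ≤ Ps u - Ps d := by
    intro u
    set q := u - d with hq
    have hder : HasDerivAt (fun h : ℝ => E (z' + h • q) - lam t (z' + h • q))
        ((G z' - lam t) q) 0 := by
      have h1 : HasDerivAt (fun s : ℝ => z' + s • q) q 0 := by
        simpa using ((hasDerivAt_id (0 : ℝ)).smul_const q).const_add z'
      have h2 : HasFDerivAt (fun x => E x - lam t x) (G z' - lam t) (z' + (0 : ℝ) • q) := by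
        rw [zero_smul, add_zero]
        exact (S.hE z').sub (lam t).hasFDerivAt
      exact h2.comp_hasDerivAt (0 : ℝ) h1
    have hsl := hder.hasDerivWithinAt (s := Ioi 0)
    rw [hasDerivWithinAt_iff_tendsto_slope' (by simp)] at hsl
    have : -(Ps u - Ps d) ≤ (G z' - lam t) q := by
      refine ge_of_tendsto hsl ?_
      filter_upwards [Ioo_mem_nhdsGT (zero_lt_one (α := ℝ))] with h hh
      rw [slope_def_field, le_div_iff₀ (by simpa using hh.1)]
      have h1 := hmin (z' + h • q)
      have h2 : Ps (z' + h • q - z) ≤ (1 - h) * Ps d + h * Ps u := by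
        have e : z' + h • q - z = (1 - h) • d + h • u := by rw [hq, hd]; module
        rw [e, ← S.P_smul _ _ (sub_nonneg.2 hh.2.le), ← S.P_smul _ _ hh.1.le]
        exact S.P_add _ _
      simp only [hJ] at h1
      simp only [zero_smul, add_zero, sub_zero]
      rw [← hd] at h1
      linarith
    simp only [sub_apply] at this ⊢
    linarith
  refine ⟨z', fun v => ?_, ?_⟩
  · have h1 := hvar (v + d)
    rw [add_sub_cancel_right] at h1
    linarith [S.P_add v d]
  · have h1 := hvar 0
    have h2 := hvar ((2 : ℝ) • d)
    rw [S.P_smul _ _ (by norm_num)] at h2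
    have e : (2 : ℝ) • d - d = d := by module
    rw [e] at h2
    rw [S.P_zero, zero_sub, map_neg] at h1
    linarith


/-- State of the piecewise linear construction after `k` steps of size `τ`. -/
structure Partial (G : W → W →L[ℝ] ℝ) (lam : ℝ → W →L[ℝ] ℝ) (Ps : W → ℝ) (z₀ : W)
    (M τ e : ℝ) (k : ℕ) (y : ℝ → W) (z : W) : Prop where
  cont : Continuous y
  init : y 0 = z₀
  const : ∀ t, k * τ ≤ t → y t = z
  stab : ∀ v, (lam (k * τ) - G z) v ≤ Ps v
  bound : ‖z‖ ≤ ‖z₀‖ + M * (k * τ)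
  loc : ∀ a, 0 ≤ a → a < k * τ → ∃ (eta : W →L[ℝ] ℝ) (v : W), (∀ u, eta u ≤ Ps u) ∧
    eta v = Ps v ∧ ‖eta - (lam a - G (y a))‖ ≤ e ∧ ‖v‖ ≤ M ∧
    ∀ᶠ b in 𝓝[>] a, y b = y a + (b - a) • v

lemma Setup.partial_succ (S : Setup E G H lam Ps κ L T ρ) {z₀ : W} {Q τ : ℝ} (hQ0 : 0 ≤ Q)
    (hQ : ∀ a b, ‖a‖ ≤ ‖z₀‖ + L / κ * T + 1 → ‖b‖ ≤ ‖z₀‖ + L / κ * T + 1 →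
      ‖G a - G b‖ ≤ Q * ‖a - b‖) (hτ : 0 < τ) {k : ℕ} (hk : ((k + 1 : ℕ) : ℝ) * τ ≤ T)
    {y : ℝ → W} {z : W}
    (P : Partial G lam Ps z₀ (L / κ) τ ((L + Q * (L / κ)) * τ) k y z) :
    ∃ y' z', Partial G lam Ps z₀ (L / κ) τ ((L + Q * (L / κ)) * τ) (k + 1) y' z' := by
  have hκ := S.hκ
  have hL := S.hL
  obtain ⟨z', hst, heq⟩ := S.step (((k + 1 : ℕ) : ℝ) * τ) z
  set M := L / κ with hM
  have hM0 : 0 ≤ M := by positivity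
  set d := z' - z with hd
  set t' := ((k + 1 : ℕ) : ℝ) * τ with ht'
  have ht'k : t' = k * τ + τ := by rw [ht']; push_cast; ring
  have hkτ : 0 ≤ (k : ℝ) * τ := by positivity
  have ht'm : t' ∈ Icc 0 T := ⟨by linarith, hk⟩
  have hdn : ‖d‖ ≤ M * τ := by
    have h1 := S.mono z' z
    have h2 := P.stab d
    have h3 := S.hlam t' ht'm (k * τ) ⟨hkτ, by linarith⟩
    have h4 : |t' - k * τ| = τ := by rw [ht'k, add_sub_cancel_left, abs_of_pos hτ]
    rw [h4] at h3
    have h5 : (lam t' - lam (k * τ)) d ≤ L * τ * ‖d‖ :=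
      (Real.le_norm_self _).trans (((lam t' - lam (k * τ)).le_opNorm d).trans (by gcongr))
    rw [← hd] at h1
    simp only [sub_apply] at h1 h2 heq h5
    have h6 : κ * ‖d‖ ^ 2 ≤ L * τ * ‖d‖ := by linarith
    rcases (norm_nonneg d).eq_or_lt with h0 | h0
    · rw [← h0]; positivity
    · have : κ * ‖d‖ ≤ L * τ := by
        refine le_of_mul_le_mul_right ?_ h0
        linarith
      rw [hM, div_mul_eq_mul_div, le_div_iff₀ hκ]; linarith
  set c : ℝ → ℝ := fun t => max 0 (min 1 (t / τ - k)) with hc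
  have hc0 : ∀ t, t ≤ k * τ → c t = 0 := by
    intro t ht
    have : t / τ - k ≤ 0 := by
      rw [sub_nonpos, div_le_iff₀ hτ]; exact ht
    simp only [hc]
    exact max_eq_left ((min_le_right _ _).trans this)
  have hc1 : ∀ t, t' ≤ t → c t = 1 := by
    intro t ht
    have : 1 ≤ t / τ - k := by
      rw [le_sub_iff_add_le, le_div_iff₀ hτ]; linarith
    simp only [hc]
    rw [min_eq_left this]; norm_num
  have hcm : ∀ t, k * τ ≤ t → t ≤ t' → c t = t / τ - k ∧ 0 ≤ c t ∧ c t ≤ 1 := by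
    intro t h1 h2
    have e1 : 0 ≤ t / τ - k := by rw [sub_nonneg, le_div_iff₀ hτ]; exact h1
    have e2 : t / τ - k ≤ 1 := by rw [sub_le_iff_le_add, div_le_iff₀ hτ]; linarith
    have : c t = t / τ - k := by
      simp only [hc]; rw [min_eq_right e2, max_eq_right e1]
    rw [this]; exact ⟨rfl, e1, e2⟩
  have hbz' : ‖z'‖ ≤ ‖z₀‖ + M * t' := by
    have h1 : ‖z'‖ ≤ ‖z‖ + ‖d‖ := by
      have := norm_add_le z d
      rwa [hd, add_sub_cancel] at this
    have := P.bound
    rw [ht'k, mul_add]; linarith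
  refine ⟨fun t => y t + c t • d, z', ?_, ?_, ?_, ?_, ?_, ?_⟩
  · have : Continuous c := by fun_prop
    exact P.cont.add (this.smul continuous_const)
  · simp only [P.init, hc0 0 hkτ, zero_smul, add_zero]
  · intro t ht
    have h1 : k * τ ≤ t := by
      have : t' ≤ t := ht
      linarith
    simp only [P.const t h1, hc1 t ht, one_smul, hd, add_sub_cancel]
  · exact hst
  · exact hbz'
  · intro a ha0 ha
    rcases lt_or_ge a (k * τ) with hak | hak
    · obtain ⟨eta, v, h1, h2, h3, h4, h5⟩ := P.loc a ha0 hak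
      refine ⟨eta, v, h1, h2, ?_, h4, ?_⟩
      · simpa only [hc0 a hak.le, zero_smul, add_zero] using h3
      · filter_upwards [h5, Ioo_mem_nhdsGT hak] with b hb hb'
        simp only [hc0 a hak.le, hc0 b hb'.2.le, zero_smul, add_zero]
        exact hb
    · have ha' : a < t' := ha
      obtain ⟨ca, ca0, ca1⟩ := hcm a hak ha'.le
      refine ⟨lam t' - G z', (1 / τ) • d, hst, ?_, ?_, ?_, ?_⟩
      · rw [map_smul, heq, S.P_smul _ _ (by positivity)]; rfl
      · have hya : y a + c a • d = z + c a • d := by rw [P.const a hak]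
        simp only [hya]
        have hdiff : z' - (z + c a • d) = (1 - c a) • d := by rw [hd]; module
        have hsd : ‖z' - (z + c a • d)‖ ≤ M * τ := by
          rw [hdiff, norm_smul, Real.norm_eq_abs, abs_of_nonneg (by linarith)]
          calc (1 - c a) * ‖d‖ ≤ 1 * ‖d‖ := by gcongr; linarith
            _ ≤ M * τ := by linarith
        have hcd : ‖c a • d‖ ≤ M * τ := by
          rw [norm_smul, Real.norm_eq_abs, abs_of_nonneg ca0]
          calc c a * ‖d‖ ≤ 1 * ‖d‖ := by gcongr
            _ ≤ M * τ := by linarith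
        have hMt : M * t' ≤ M * T := by gcongr
        have hn : ‖z + c a • d‖ ≤ ‖z₀‖ + M * T + 1 := by
          have := norm_add_le z (c a • d)
          have := P.bound
          rw [ht'k, mul_add] at hMt
          linarith
        have g1 := hQ z' (z + c a • d) (by linarith) hn
        have g2 := S.hlam t' ht'm a ⟨ha0, ha'.le.trans hk⟩
        have g3 : |t' - a| ≤ τ := by rw [abs_of_nonneg (by linarith)]; linarith
        have e : lam t' - G z' - (lam a - G (z + c a • d)) =
            (lam t' - lam a) - (G z' - G (z + c a • d)) := by abel
        rw [e]
        calc _ ≤ ‖lam t' - lam a‖ + ‖G z' - G (z + c a • d)‖ := norm_sub_le _ _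
          _ ≤ L * τ + Q * (M * τ) := by
            refine add_le_add (g2.trans (by gcongr)) (g1.trans (by gcongr))
          _ = _ := by ring
      · rw [norm_smul, Real.norm_eq_abs, abs_of_pos (by positivity), one_div,
          inv_mul_le_iff₀ hτ]
        linarith
      · filter_upwards [Ioo_mem_nhdsGT ha'] with b hb
        have hb1 := (hcm b (hak.trans hb.1.le) hb.2.le).1
        simp only [P.const a hak, P.const b (hak.trans hb.1.le), hb1, ca]
        rw [smul_smul, add_assoc, ← add_smul]
        congr 2
        field_simp
        ring

lemma Setup.partial_all (S : Setup E G H lam Ps κ L T ρ) {z₀ : W} {Q τ : ℝ} (hQ0 : 0 ≤ Q)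
    (hQ : ∀ a b, ‖a‖ ≤ ‖z₀‖ + L / κ * T + 1 → ‖b‖ ≤ ‖z₀‖ + L / κ * T + 1 →
      ‖G a - G b‖ ≤ Q * ‖a - b‖) (hτ : 0 < τ) (hz : ∀ v, (lam 0 - G z₀) v ≤ Ps v) (k : ℕ)
    (hk : (k : ℝ) * τ ≤ T) :
    ∃ y z, Partial G lam Ps z₀ (L / κ) τ ((L + Q * (L / κ)) * τ) k y z := by
  induction k with
  | zero =>
    refine ⟨fun _ => z₀, z₀, continuous_const, rfl, fun _ _ => rfl, by simpa using hz, by simp, ?_⟩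
    intro a h1 h2
    simp at h2
    linarith
  | succ k ih =>
    obtain ⟨y, z, P⟩ := ih (by push_cast at hk; nlinarith)
    exact S.partial_succ hQ0 hQ hτ hk P

lemma Setup.approx (S : Setup E G H lam Ps κ L T ρ) (z₀ : W)
    (hz : ∀ v, (lam 0 - G z₀) v ≤ Ps v) :
    ∃ M C D : ℝ, 0 ≤ M ∧ 0 ≤ C ∧ 0 ≤ D ∧ ∀ n : ℕ,
      ∃ y, ASol G lam Ps T z₀ M C (D / (n + 1)) y := by
  have hκ := S.hκ
  have hL := S.hL
  have hT := S.hT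
  set M := L / κ with hM
  have hM0 : 0 ≤ M := by positivity
  obtain ⟨Q, hQ0, hQ⟩ := S.taylor (‖z₀‖ + M * T + 1) (by positivity)
  have hQ' := fun a b ha hb => (hQ a b ha hb).2.1
  refine ⟨M, (L + Q * M) * M, (L + Q * M) * T * (M + 1), hM0, by positivity, by positivity, ?_⟩
  intro n
  set τ := T / (n + 1) with hτ
  have hτ0 : 0 < τ := by positivity
  have hnτ : ((n + 1 : ℕ) : ℝ) * τ = T := by rw [hτ]; push_cast; field_simp
  obtain ⟨y, z, P⟩ := S.partial_all hQ0 hQ' hτ0 hz (n + 1) hnτ.le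
  set e := (L + Q * M) * τ with he
  have he0 : 0 ≤ e := by positivity
  have hε : (L + Q * M) * T * (M + 1) / (n + 1) = e * (M + 1) := by
    rw [he, hτ]; field_simp
  rw [hε]
  have hloc := P.loc
  have hconst := P.const
  have hPstab := P.stab
  rw [hnτ] at hloc hconst hPstab
  -- Lipschitz bound
  have hlip1 : ∀ a ∈ Icc (0 : ℝ) T, ∀ b ∈ Icc (0 : ℝ) T, a ≤ b → ‖y b - y a‖ ≤ M * (b - a) := by
    intro a ha b hb hab
    have hex : ∀ x ∈ Ico a b, ∃ v, HasDerivWithinAt y v (Ici x) x ∧ ‖v‖ ≤ M := by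
      intro x hx
      obtain ⟨eta, v, -, -, -, hv, hev⟩ := hloc x (ha.1.trans hx.1) (hx.2.trans_le hb.2)
      refine ⟨v, ?_, hv⟩
      rw [← hasDerivWithinAt_Ioi_iff_Ici]
      have h1 : HasDerivAt (fun b : ℝ => y x + (b - x) • v) v x := by
        simpa using (((hasDerivAt_id x).sub_const x).smul_const v).const_add (y x)
      exact h1.hasDerivWithinAt.congr_of_eventuallyEq hev (by simp)
    choose! f' hf' using hex
    exact norm_image_sub_le_of_norm_deriv_right_le_segment P.cont.continuousOn
      (fun x hx => (hf' x hx).1) (fun x hx => (hf' x hx).2) b (right_mem_Icc.2 hab)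
  have hlip : ∀ a ∈ Icc (0 : ℝ) T, ∀ b ∈ Icc (0 : ℝ) T, ‖y a - y b‖ ≤ M * |a - b| := by
    intro a ha b hb
    rcases le_total a b with h | h
    · rw [norm_sub_rev, abs_sub_comm, abs_of_nonneg (sub_nonneg.2 h)]; exact hlip1 a ha b hb h
    · rw [abs_of_nonneg (sub_nonneg.2 h)]; exact hlip1 b hb a ha h
  have hbd : ∀ s ∈ Icc (0 : ℝ) T, ‖y s‖ ≤ ‖z₀‖ + M * T + 1 := by
    intro s hs
    have h1 := hlip s hs 0 (left_mem_Icc.2 hT.le)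
    rw [P.init, sub_zero, abs_of_nonneg hs.1] at h1
    have h2 := norm_sub_norm_le (y s) z₀
    have := mul_le_mul_of_nonneg_left hs.2 hM0
    linarith
  refine ⟨y, P.init, hlip, ?_, ?_⟩
  · intro a ha v
    rcases ha.2.lt_or_eq with h | h
    · obtain ⟨eta, -, h1, -, h2, -⟩ := hloc a ha.1 h
      have h3 : -((eta - (lam a - G (y a))) v) ≤ e * ‖v‖ :=
        (neg_le_abs _).trans (((eta - (lam a - G (y a))).le_opNorm v).trans (by gcongr))
      have h4 := h1 v
      rw [sub_apply] at h3
      have : 0 ≤ e * M * ‖v‖ := by positivity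
      linarith
    · have : y a = z := hconst a h.ge
      rw [this, h]
      have : 0 ≤ e * (M + 1) * ‖v‖ := by positivity
      linarith [hPstab v]
  · intro a ha b hb hab
    set g : ℝ → ℝ := fun x => Ps (y x - y a) - (lam a - G (y a)) (y x - y a) with hg
    have hgc : Continuous g := by
      have h1 := S.P_cont
      have h2 := P.cont
      fun_prop
    have main := dini (f := g) (a := a) (b := b) (K := 0) (δ := 0)
      (ε := (L + Q * M) * (b - a) * M + e * M) hgc.continuousOn
      (by simp [hg, S.P_zero]) ?_ b (right_mem_Icc.2 hab)
    · rw [gronwallBound_K0] at main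
      simp only [hg] at main
      have : 0 ≤ e * (b - a) := mul_nonneg he0 (sub_nonneg.2 hab)
      nlinarith
    · intro x hx
      have hx0 : x ∈ Icc 0 T := ⟨ha.1.trans hx.1, (hx.2.trans_le hb.2).le⟩
      obtain ⟨eta, v, h1, h2, h3, h4, h5⟩ := hloc x hx0.1 (hx.2.trans_le hb.2)
      refine ⟨0, ?_⟩
      filter_upwards [h5, self_mem_nhdsWithin] with s hs hsx
      have hsx' : 0 < s - x := sub_pos.2 hsx
      have k1 : Ps (y s - y a) ≤ Ps (y x - y a) + (s - x) * Ps v := by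
        have e1 : y s - y a = (y x - y a) + (s - x) • v := by rw [hs]; abel
        rw [e1, ← S.P_smul _ _ hsx'.le]
        exact S.P_add _ _
      have k2 : (lam a - G (y a)) (y s - y a) =
          (lam a - G (y a)) (y x - y a) + (s - x) * (lam a - G (y a)) v := by
        have e1 : y s - y a = (y x - y a) + (s - x) • v := by rw [hs]; abel
        rw [e1, map_add, map_smul, smul_eq_mul]
      have k3 : ‖eta - (lam a - G (y a))‖ ≤ (L + Q * M) * (b - a) + e := by
        have e1 : eta - (lam a - G (y a)) = (eta - (lam x - G (y x))) +
          ((lam x - lam a) - (G (y x) - G (y a))) := by abel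
        rw [e1]
        have q1 := S.hlam x hx0 a ha
        have q2 := hQ' (y x) (y a) (hbd x hx0) (hbd a ha)
        have q3 := hlip1 a ha x hx0 hx.1
        rw [abs_of_nonneg (sub_nonneg.2 hx.1)] at q1
        have q4 : L * (x - a) ≤ L * (b - a) := by gcongr; exact hx.2.le
        have q5 : Q * ‖y x - y a‖ ≤ Q * (M * (b - a)) := by
          gcongr
          refine q3.trans ?_
          gcongr
          exact hx.2.le
        have q6 := norm_add_le (eta - (lam x - G (y x))) ((lam x - lam a) - (G (y x) - G (y a)))
        have q7 := norm_sub_le (lam x - lam a) (G (y x) - G (y a))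
        linarith
      have k4 : Ps v - (lam a - G (y a)) v ≤ ((L + Q * M) * (b - a) + e) * M := by
        rw [← h2, ← sub_apply]
        refine (Real.le_norm_self _).trans (((eta - (lam a - G (y a))).le_opNorm v).trans ?_)
        have : 0 ≤ b - a := sub_nonneg.2 hab
        gcongr
      have k5 := mul_le_mul_of_nonneg_left k4 hsx'.le
      simp only [hg]
      rw [k2]
      linarith

lemma Setup.exists_sol (S : Setup E G H lam Ps κ L T ρ) (z₀ : W)
    (hz : ∀ v, (lam 0 - G z₀) v ≤ Ps v) :
    ∃ M C : ℝ, 0 ≤ M ∧ 0 ≤ C ∧ ∃ y, ASol G lam Ps T z₀ M C 0 y := by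
  obtain ⟨M, C, D, hM, hC, hD, h⟩ := S.approx z₀ hz
  choose y hy using h
  obtain ⟨K, hK, hcomp⟩ := S.compare z₀ (C := C) hM
  have hlim0 : Tendsto (fun n : ℕ => D / ((n : ℝ) + 1)) atTop (𝓝 0) := by
    have := (tendsto_one_div_add_atTop_nhds_zero_nat (𝕜 := ℝ)).const_mul D
    simpa [div_eq_mul_inv] using this
  have hc : ∀ s ∈ Icc (0 : ℝ) T, ∃ l, Tendsto (fun n => y n s) atTop (𝓝 l) := by
    intro s hs
    apply cauchySeq_tendsto_of_complete
    refine cauchySeq_of_le_tendsto_0 (fun N : ℕ => Real.sqrt (K * (2 * (D / ((N : ℝ) + 1))))) ?_ ?_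
    · intro n k N hn hk
      rw [dist_eq_norm]
      apply Real.le_sqrt_of_sq_le
      refine (hcomp _ _ (by positivity) (by positivity) _ _ (hy n) (hy k) s hs).trans ?_
      have h3 : D / ((n : ℝ) + 1) ≤ D / ((N : ℝ) + 1) := by gcongr
      have h4 : D / ((k : ℝ) + 1) ≤ D / ((N : ℝ) + 1) := by gcongr
      gcongr
      linarith
    · simpa using ((hlim0.const_mul 2).const_mul K).sqrt
  choose! Y hY using hc
  refine ⟨M, C, hM, hC, Y, ?_, ?_, ?_, ?_⟩
  · have h0 := hY 0 (left_mem_Icc.2 S.hT.le)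
    refine tendsto_nhds_unique h0 ?_
    simp only [(hy _).init]
    exact tendsto_const_nhds
  · intro a ha b hb
    exact le_of_tendsto' ((hY a ha).sub (hY b hb)).norm fun n => (hy n).lip a ha b hb
  · intro a ha v
    have hg : Tendsto (fun n => (lam a - G (y n a)) v) atTop (𝓝 ((lam a - G (Y a)) v)) := by
      have hcont : Continuous fun x => (lam a - G x) v := by
        have := S.G_cont
        fun_prop
      exact (hcont.tendsto _).comp (hY a ha)
    exact le_of_tendsto_of_tendsto' hg ((hlim0.mul_const ‖v‖).const_add (Ps v))
      fun n => (hy n).stab a ha v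
  · intro a ha b hb hab
    have h1 := (hY b hb).sub (hY a ha)
    have h2 := (S.P_cont.tendsto _).comp h1
    have h3 : Tendsto (fun n => lam a - G (y n a)) atTop (𝓝 (lam a - G (Y a))) :=
      ((S.G_cont.tendsto _).comp (hY a ha)).const_sub _
    have h4 : Tendsto (fun n => (lam a - G (y n a)) (y n b - y n a)) atTop
        (𝓝 ((lam a - G (Y a)) (Y b - Y a))) :=
      (((continuous_fst (X := W →L[ℝ] ℝ) (Y := W)).clm_apply continuous_snd).tendsto
        (lam a - G (Y a), Y b - Y a)).comp (h3.prodMk_nhds h1)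
    exact le_of_tendsto_of_tendsto' h2
      ((h4.add_const (C * (b - a) ^ 2)).add (hlim0.mul_const (b - a)))
      fun n => (hy n).en a ha b hb hab


lemma lip_integral {y : ℝ → W} {M T : ℝ} (hM : 0 ≤ M) (hT : 0 < T)
    (hlip : ∀ a ∈ Icc (0 : ℝ) T, ∀ b ∈ Icc (0 : ℝ) T, ‖y a - y b‖ ≤ M * |a - b|) :
    ∃ g : ℝ → W, IntervalIntegrable g volume 0 T ∧
      ∀ s ∈ Icc (0 : ℝ) T, y s = y 0 + ∫ r in (0 : ℝ)..s, g r := by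
  set Y : ℝ → W := fun t => y (projIcc 0 T hT.le t) with hYdef
  have hYy : ∀ s ∈ Icc (0 : ℝ) T, Y s = y s := by
    intro s hs
    simp only [hYdef, projIcc_of_mem hT.le hs]
  have hYl : ∀ a b, ‖Y a - Y b‖ ≤ M * |a - b| := by
    intro a b
    refine (hlip _ (projIcc 0 T hT.le a).2 _ (projIcc 0 T hT.le b).2).trans ?_
    have := (LipschitzWith.projIcc hT.le).dist_le_mul a b
    rw [NNReal.coe_one, one_mul, Subtype.dist_eq, Real.dist_eq, Real.dist_eq] at this
    gcongr
  have hYc : Continuous Y := by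
    have : LipschitzWith ⟨M, hM⟩ Y := LipschitzWith.of_dist_le_mul fun u v => by
      rw [Real.dist_eq, dist_eq_norm]; exact hYl u v
    exact this.continuous
  set D : ℕ → ℝ → W := fun n t => ((n : ℝ) + 1) • (Y (t + ((n : ℝ) + 1)⁻¹) - Y t) with hD
  have hDc : ∀ n, Continuous (D n) := by
    intro n; simp only [hD]; fun_prop
  have hDb : ∀ n t, ‖D n t‖ ≤ M := by
    intro n t
    have hn : (0 : ℝ) < n + 1 := by positivity
    have := hYl (t + ((n : ℝ) + 1)⁻¹) t
    rw [add_sub_cancel_left, abs_of_pos (by positivity)] at this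
    simp only [hD]
    rw [norm_smul, Real.norm_eq_abs, abs_of_pos hn]
    calc ((n : ℝ) + 1) * _ ≤ ((n : ℝ) + 1) * (M * ((n : ℝ) + 1)⁻¹) := by gcongr
      _ = M := by field_simp
  set μ : Measure ℝ := volume.restrict (Ioc 0 T) with hμ
  have hDm : ∀ n, MemLp (D n) 2 μ := fun n =>
    MemLp.of_bound (hDc n).aestronglyMeasurable M (Eventually.of_forall (hDb n))
  set d : ℕ → Lp W 2 μ := fun n => (hDm n).toLp (D n) with hd
  obtain ⟨B, hB⟩ : ∃ B, ∀ n, ‖d n‖ ≤ B := by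
    refine ⟨_, fun n => Lp.norm_le_of_ae_bound hM ?_⟩
    filter_upwards [(hDm n).coeFn_toLp] with x hx
    rw [hd, hx]; exact hDb n x
  set x : ℕ → WeakDual ℝ (Lp W 2 μ) := fun n =>
    StrongDual.toWeakDual (InnerProductSpace.toDual ℝ (Lp W 2 μ) (d n)) with hx
  obtain ⟨φ, -, hφ⟩ := (WeakDual.isCompact_closedBall (𝕜 := ℝ) (E := Lp W 2 μ) 0 B).exists_mapClusterPt
    (f := atTop) (u := x) (Filter.tendsto_principal.2 (Eventually.of_forall fun n => by
      simp only [hx, mem_preimage, mem_closedBall_zero_iff]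
      refine le_trans (le_of_eq ?_) (hB n)
      exact (InnerProductSpace.toDual ℝ (Lp W 2 μ)).norm_map (d n)))
  set g : Lp W 2 μ := (InnerProductSpace.toDual ℝ (Lp W 2 μ)).symm (WeakDual.toStrongDual φ) with hg
  have hgi : Integrable (g : ℝ → W) μ := (Lp.memLp g).integrable (by norm_num)
  have hgint : IntervalIntegrable (g : ℝ → W) volume 0 T := by
    rw [intervalIntegrable_iff_integrableOn_Ioc_of_le hT.le]; exact hgi
  -- primitive of `Y`
  set P : ℝ → W := fun t => ∫ r in (0 : ℝ)..t, Y r with hP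
  have hPd : ∀ t, HasDerivAt P (Y t) t := fun t =>
    intervalIntegral.integral_hasDerivAt_right (hYc.intervalIntegrable _ _)
      (hYc.stronglyMeasurableAtFilter _ _) hYc.continuousAt
  have hDi : ∀ n s, ∫ r in (0 : ℝ)..s, D n r =
      (((n : ℝ) + 1)⁻¹)⁻¹ • (P (s + ((n : ℝ) + 1)⁻¹) - P s) -
      (((n : ℝ) + 1)⁻¹)⁻¹ • (P (0 + ((n : ℝ) + 1)⁻¹) - P 0) := by
    intro n s
    set h := ((n : ℝ) + 1)⁻¹
    have hc1 : Continuous fun t => Y (t + h) := by fun_prop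
    simp only [hD]
    rw [intervalIntegral.integral_smul, intervalIntegral.integral_sub
      (hc1.intervalIntegrable _ _) (hYc.intervalIntegrable _ _),
      intervalIntegral.integral_comp_add_right (fun t => Y t) h]
    have : ∫ r in (0 + h)..(s + h), Y r = P (s + h) - P (0 + h) := by
      simp only [hP]
      rw [intervalIntegral.integral_interval_sub_left (hYc.intervalIntegrable _ _)
        (hYc.intervalIntegrable _ _)]
    have hP0 : P 0 = 0 := by simp [hP]
    rw [this, hP0, inv_inv, ← smul_sub]
    congr 1
    simp only [hP]
    abel
  have hh : Tendsto (fun n : ℕ => ((n : ℝ) + 1)⁻¹) atTop (𝓝[≠] 0) := by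
    refine tendsto_nhdsWithin_iff.2 ⟨?_, Eventually.of_forall fun n => ?_⟩
    · simpa using tendsto_one_div_add_atTop_nhds_zero_nat (𝕜 := ℝ)
    · have : (0 : ℝ) < ((n : ℝ) + 1)⁻¹ := by positivity
      exact this.ne'
  have hDl : ∀ s, Tendsto (fun n => ∫ r in (0 : ℝ)..s, D n r) atTop (𝓝 (Y s - Y 0)) := by
    intro s
    simp only [hDi]
    exact ((hasDerivAt_iff_tendsto_slope_zero.1 (hPd s)).comp hh).sub
      ((hasDerivAt_iff_tendsto_slope_zero.1 (hPd 0)).comp hh)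
  refine ⟨g, hgint, fun s hs => ?_⟩
  have hset : ∀ f : ℝ → W, ∫ r in Ioc 0 s, f r ∂μ = ∫ r in (0 : ℝ)..s, f r := by
    intro f
    rw [intervalIntegral.integral_of_le hs.1, hμ, Measure.restrict_restrict measurableSet_Ioc,
      inter_eq_left.2 (Ioc_subset_Ioc_right hs.2)]
  have key : ∫ r in (0 : ℝ)..s, g r = Y s - Y 0 := by
    refine ext_inner_left ℝ fun v => ?_
    have hfin : μ (Ioc 0 s) ≠ ⊤ := measure_ne_top _ _
    set Sv : Lp W 2 μ := indicatorConstLp 2 measurableSet_Ioc hfin v with hSv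
    have h1 : φ Sv = ⟪v, ∫ r in (0 : ℝ)..s, g r⟫ := by
      rw [← hset, ← L2.inner_indicatorConstLp_eq_inner_setIntegral ℝ measurableSet_Ioc hfin v g,
        real_inner_comm, hg, InnerProductSpace.toDual_symm_apply]
      rfl
    have h2 : ∀ n, x n Sv = ⟪v, ∫ r in (0 : ℝ)..s, D n r⟫ := by
      intro n
      have e1 : x n Sv = ⟪d n, Sv⟫ := InnerProductSpace.toDual_apply_apply
      rw [e1, real_inner_comm, hSv, L2.inner_indicatorConstLp_eq_inner_setIntegral ℝ
        measurableSet_Ioc hfin v (d n), ← hset]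
      congr 1
      refine integral_congr_ae ?_
      exact ae_restrict_of_ae (hDm n).coeFn_toLp
    have h3 : Tendsto (fun n => x n Sv) atTop (𝓝 ⟪v, Y s - Y 0⟫) := by
      simp only [h2]
      exact tendsto_const_nhds.inner (hDl s)
    have h4 : MapClusterPt (φ Sv) atTop (fun n => x n Sv) :=
      MapClusterPt.continuousAt_comp (WeakDual.eval_continuous Sv).continuousAt hφ
    rw [← h1]
    have h5 : ClusterPt (φ Sv) (𝓝 ⟪v, Y s - Y 0⟫) := ClusterPt.mono h4 h3
    exact eq_of_nhds_neBot h5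
  rw [key, hYy s hs, hYy 0 (left_mem_Icc.2 hT.le)]
  abel


lemma ASol.weaken {z₀ : W} {M C M' C' : ℝ} {y : ℝ → W} (h : ASol G lam Ps T z₀ M C 0 y)
    (hM : M ≤ M') (hC : C ≤ C') : ASol G lam Ps T z₀ M' C' 0 y where
  init := h.init
  lip := fun a ha b hb => (h.lip a ha b hb).trans
    (mul_le_mul_of_nonneg_right hM (abs_nonneg _))
  stab := h.stab
  en := fun a ha b hb hab => by
    have h1 := h.en a ha b hb hab
    have h2 := mul_le_mul_of_nonneg_right hC (sq_nonneg (b - a))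
    linarith

lemma Setup.forward (S : Setup E G H lam Ps κ L T ρ) {z₀ : W} {M C : ℝ} (hM : 0 ≤ M)
    {y : ℝ → W} (h : ASol G lam Ps T z₀ M C 0 y) :
    ∃ g : ℝ → W, (∀ᵐ s ∂(volume.restrict (Ioo (0 : ℝ) T)), ‖g s‖ ≤ M) ∧
      IntervalIntegrable g volume 0 T ∧
      (∀ s ∈ Icc (0 : ℝ) T, y s = z₀ + ∫ r in (0 : ℝ)..s, g r) ∧
      ∀ᵐ s ∂(volume.restrict (Ioo (0 : ℝ) T)),
        (∀ v, (lam s - G (y s)) v ≤ Ps v) ∧ (lam s - G (y s)) (g s) = Ps (g s) := by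
  have hT := S.hT
  obtain ⟨g, hg, hrep⟩ := lip_integral hM hT h.lip
  rw [h.init] at hrep
  have hd : ∀ᵐ s ∂(volume.restrict (Ioo (0 : ℝ) T)), HasDerivAt y (g s) s := by
    rw [ae_restrict_iff' measurableSet_Ioo]
    filter_upwards [hg.ae_hasDerivAt_integral] with s hs hsm
    rw [uIcc_of_le hT.le] at hs
    have h1 := hs (Ioo_subset_Icc_self hsm) 0 (left_mem_Icc.2 hT.le)
    have h2 := h1.const_add z₀
    refine h2.congr_of_eventuallyEq ?_
    filter_upwards [Icc_mem_nhds hsm.1 hsm.2] with t ht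
    exact hrep t ht
  refine ⟨g, ?_, hg, hrep, ?_⟩
  · filter_upwards [hd, ae_restrict_mem measurableSet_Ioo] with s hs hsm
    refine hs.le_of_lip' hM ?_
    filter_upwards [Icc_mem_nhds hsm.1 hsm.2] with t ht
    exact h.lip t ht s (Ioo_subset_Icc_self hsm)
  · filter_upwards [hd, ae_restrict_mem measurableSet_Ioo] with s hs hsm
    have hsI := Ioo_subset_Icc_self hsm
    have hst : ∀ v, (lam s - G (y s)) v ≤ Ps v := fun v => by
      simpa using h.stab s hsI v
    refine ⟨hst, le_antisymm (hst _) ?_⟩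
    have hsl := hs.tendsto_slope_zero_right
    have l1 := (S.P_cont.tendsto (g s)).comp hsl
    have hid : Tendsto (fun t : ℝ => C * t) (𝓝[>] 0) (𝓝 0) := by
      have : Continuous fun t : ℝ => C * t := by fun_prop
      have := this.tendsto 0
      rw [mul_zero] at this
      exact this.mono_left nhdsWithin_le_nhds
    have l2 := (((lam s - G (y s)).continuous.tendsto (g s)).comp hsl).add hid
    rw [add_zero] at l2
    refine le_of_tendsto_of_tendsto l1 l2 ?_
    have hsm' : (0 : ℝ) < T - s := sub_pos.2 hsm.2
    filter_upwards [Ioo_mem_nhdsGT hsm'] with t ht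
    have ht0 := ht.1
    have h1 := h.en s hsI (s + t) ⟨by linarith [hsm.1], by linarith [ht.2]⟩ (by linarith)
    simp only [Function.comp]
    rw [S.P_smul _ _ (inv_nonneg.2 ht0.le), map_smul, smul_eq_mul]
    have h2 := mul_le_mul_of_nonneg_left h1 (inv_nonneg.2 ht0.le)
    refine h2.trans (le_of_eq ?_)
    rw [add_sub_cancel_left]
    field_simp
    ring

lemma Setup.reverse (S : Setup E G H lam Ps κ L T ρ) {z₀ : W} {y g : ℝ → W} {Cb : ℝ}
    (hb : ∀ᵐ s ∂(volume.restrict (Ioo (0 : ℝ) T)), ‖g s‖ ≤ Cb)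
    (hg : IntervalIntegrable g volume 0 T)
    (hrep : ∀ s ∈ Icc (0 : ℝ) T, y s = z₀ + ∫ r in (0 : ℝ)..s, g r)
    (hae : ∀ᵐ s ∂(volume.restrict (Ioo (0 : ℝ) T)),
        (∀ v, (lam s - G (y s)) v ≤ Ps v) ∧ (lam s - G (y s)) (g s) = Ps (g s)) :
    ∃ M C, 0 ≤ M ∧ 0 ≤ C ∧ ASol G lam Ps T z₀ M C 0 y := by
  have hT := S.hT
  have hL := S.hL
  set M := max Cb 0 with hMdef
  have hM : 0 ≤ M := le_max_right _ _
  have h0 : (0 : ℝ) ∈ Icc 0 T := left_mem_Icc.2 hT.le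
  have hsub : ∀ a ∈ Icc (0 : ℝ) T, ∀ b ∈ Icc (0 : ℝ) T, y b - y a = ∫ r in a..b, g r := by
    intro a ha b hb'
    rw [hrep a ha, hrep b hb', add_sub_add_left_eq_sub]
    refine intervalIntegral.integral_interval_sub_left (hg.mono_set ?_) (hg.mono_set ?_)
    · rw [uIcc_of_le hb'.1, uIcc_of_le hT.le]; exact Icc_subset_Icc_right hb'.2
    · rw [uIcc_of_le ha.1, uIcc_of_le hT.le]; exact Icc_subset_Icc_right ha.2
  have hb2 : ∀ᵐ s : ℝ, s ∈ Ioc 0 T → ‖g s‖ ≤ M := by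
    rw [Measure.restrict_congr_set Ioo_ae_eq_Ioc, ae_restrict_iff' measurableSet_Ioc] at hb
    filter_upwards [hb] with s hs hm
    exact (hs hm).trans (le_max_left _ _)
  have hinit : y 0 = z₀ := by
    rw [hrep 0 h0]; simp
  have hlip : ∀ a ∈ Icc (0 : ℝ) T, ∀ b ∈ Icc (0 : ℝ) T, ‖y a - y b‖ ≤ M * |a - b| := by
    intro a ha b hb'
    rw [hsub b hb' a ha]
    refine intervalIntegral.norm_integral_le_of_norm_le_const_ae ?_
    filter_upwards [hb2] with s hs hm
    refine hs ⟨lt_of_le_of_lt (le_min hb'.1 ha.1) hm.1, hm.2.trans (max_le hb'.2 ha.2)⟩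
  have hyc : ContinuousOn y (Icc 0 T) := by
    have : LipschitzOnWith (Real.toNNReal M) y (Icc 0 T) :=
      LipschitzOnWith.of_dist_le_mul fun a ha b hb => by
        rw [dist_eq_norm, Real.dist_eq]
        exact (hlip a ha b hb).trans
          (mul_le_mul_of_nonneg_right (Real.le_coe_toNNReal M) (abs_nonneg _))
    exact this.continuousOn
  have hlc : ContinuousOn lam (Icc 0 T) := by
    have : LipschitzOnWith (Real.toNNReal L) lam (Icc 0 T) :=
      LipschitzOnWith.of_dist_le_mul fun a ha b hb => by
        rw [dist_eq_norm, Real.dist_eq]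
        exact (S.hlam a ha b hb).trans
          (mul_le_mul_of_nonneg_right (Real.le_coe_toNNReal L) (abs_nonneg _))
    exact this.continuousOn
  have hst : ∀ a ∈ Icc (0 : ℝ) T, ∀ v, (lam a - G (y a)) v ≤ Ps v := by
    intro a ha v
    have hae' := hae
    rw [ae_restrict_iff' measurableSet_Ioo] at hae'
    have hD := (Measure.dense_of_ae hae').open_subset_closure_inter (isOpen_Ioo (a := (0 : ℝ)) (b := T))
    have hD2 := closure_minimal hD isClosed_closure
    rw [closure_Ioo hT.ne] at hD2
    have hc : ContinuousOn (fun s => (lam s - G (y s)) v) (Icc 0 T) := by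
      have h1 : ContinuousOn (fun s => G (y s)) (Icc 0 T) := S.G_cont.comp_continuousOn hyc
      exact (hlc.sub h1).clm_apply continuousOn_const
    refine ContinuousWithinAt.closure_le (f := fun s => (lam s - G (y s)) v)
      (g := fun _ => Ps v) (hD2 ha) ((hc a ha).mono ?_)
      continuousWithinAt_const ?_
    · exact fun s hs => Ioo_subset_Icc_self hs.1
    · exact fun s hs => (hs.2 hs.1).1 v
  set r := ‖z₀‖ + M * T + 1 with hr
  have hr0 : 0 < r := by positivity
  have hbd : ∀ s ∈ Icc (0 : ℝ) T, ‖y s‖ ≤ r := by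
    intro s hs
    have h1 := hlip s hs 0 h0
    rw [hinit, sub_zero, abs_of_nonneg hs.1] at h1
    have h2 := norm_sub_norm_le (y s) z₀
    have := mul_le_mul_of_nonneg_left hs.2 hM
    linarith
  obtain ⟨Q, hQ0, hQ⟩ := S.taylor r hr0
  refine ⟨M, (L + Q * M) * M, hM, by positivity, hinit, hlip, fun a ha v => ?_, ?_⟩
  · simpa using hst a ha v
  intro a ha b hb' hab
  rcases hab.eq_or_lt with rfl | hlt
  · simp [S.P_zero]
  set c := (L + Q * M) * M * (b - a) with hc
  set η := lam a - G (y a) with hη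
  have hgi : IntegrableOn g (Ioc a b) volume := by
    rw [intervalIntegrable_iff_integrableOn_Ioc_of_le hT.le] at hg
    exact hg.mono_set (Ioc_subset_Ioc ha.1 hb'.2)
  have hPi : IntegrableOn (Ps ∘ g) (Ioc a b) volume := by
    refine Integrable.mono' (hgi.norm.const_mul ρ)
      (S.P_cont.comp_aestronglyMeasurable hgi.aestronglyMeasurable) (Eventually.of_forall fun x => ?_)
    simp only [Function.comp, Real.norm_eq_abs, abs_of_nonneg (S.P_nonneg _)]
    exact S.P_le _
  have hcv : ConvexOn ℝ univ Ps := by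
    refine ⟨convex_univ, fun u _ v _ p q hp hq _ => ?_⟩
    rw [smul_eq_mul, smul_eq_mul, ← S.P_smul p u hp, ← S.P_smul q v hq]
    exact S.P_add _ _
  have hvol : (volume : Measure ℝ).real (Ioc a b) = b - a := by
    rw [Real.volume_real_Ioc_of_le hab]
  have hJ := hcv.map_set_average_le (μ := (volume : Measure ℝ)) (t := Ioc a b) S.P_cont.continuousOn
    isClosed_univ (by rw [Real.volume_Ioc]; simpa using hlt) (by rw [Real.volume_Ioc]; simp)
    (Eventually.of_forall fun x => mem_univ _) hgi hPi
  have hba : 0 < b - a := sub_pos.2 hlt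
  rw [setAverage_eq, setAverage_eq, hvol, S.P_smul _ _ (inv_nonneg.2 hba.le), smul_eq_mul,
    ← intervalIntegral.integral_of_le hab, ← hsub a ha b hb'] at hJ
  have hJ2 : Ps (y b - y a) ≤ ∫ x in Ioc a b, Ps (g x) :=
    le_of_mul_le_mul_left hJ (inv_pos.2 hba)
  have hηi : IntegrableOn (fun x => η (g x)) (Ioc a b) volume := η.integrable_comp hgi
  have hci : IntegrableOn (fun _ : ℝ => c) (Ioc a b) volume := by
    simp [integrableOn_const_iff]
  have hle : ∫ x in Ioc a b, Ps (g x) ≤ ∫ x in Ioc a b, (η (g x) + c) := by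
    refine integral_mono_ae hPi (hηi.add hci) ?_
    have hsubs : Ioo a b ⊆ Ioo 0 T := Ioo_subset_Ioo ha.1 hb'.2
    have e1 := ae_restrict_of_ae_restrict_of_subset hsubs hae
    rw [Measure.restrict_congr_set Ioo_ae_eq_Ioc] at e1
    filter_upwards [e1, ae_restrict_mem measurableSet_Ioc, ae_restrict_of_ae hb2] with s hs hm hgs
    have hsI : s ∈ Icc (0 : ℝ) T := ⟨ha.1.trans hm.1.le, hm.2.trans hb'.2⟩
    have hgs' := hgs ⟨lt_of_le_of_lt ha.1 hm.1, hsI.2⟩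
    show Ps (g s) ≤ η (g s) + c
    rw [← hs.2]
    have habs : |s - a| ≤ b - a := by
      rw [abs_of_nonneg (by linarith [hm.1])]; linarith [hm.2]
    have n1 : ‖(lam s - G (y s)) - η‖ ≤ (L + Q * M) * (b - a) := by
      have e : (lam s - G (y s)) - η = (lam s - lam a) - (G (y s) - G (y a)) := by
        rw [hη]; abel
      rw [e]
      have k1 := norm_sub_le (lam s - lam a) (G (y s) - G (y a))
      have k2 := S.hlam s hsI a ha
      have k3 := (hQ (y s) (y a) (hbd s hsI) (hbd a ha)).2.1
      have k4 := mul_le_mul_of_nonneg_left (hlip s hsI a ha) hQ0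
      have k5 := mul_le_mul_of_nonneg_left habs hL
      have k6 := mul_le_mul_of_nonneg_left habs (mul_nonneg hQ0 hM)
      nlinarith
    have n2 : ((lam s - G (y s)) - η) (g s) ≤ c := by
      refine (le_abs_self _).trans ?_
      refine (((lam s - G (y s)) - η).le_opNorm (g s)).trans ?_
      calc _ ≤ (L + Q * M) * (b - a) * M := by gcongr
        _ = c := by rw [hc]; ring
    rw [sub_apply] at n2
    linarith
  have hfin : ∫ x in Ioc a b, (η (g x) + c) = η (y b - y a) + c * (b - a) := by
    rw [integral_add hηi hci, η.integral_comp_comm hgi, hsub a ha b hb',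
      intervalIntegral.integral_of_le hab, setIntegral_const, hvol, smul_eq_mul]
    ring
  have : c * (b - a) = (L + Q * M) * M * (b - a) ^ 2 := by rw [hc]; ring
  linarith

end Abstract

lemma polar_bound {Z : Type*} [NormedAddCommGroup Z] [InnerProductSpace ℝ Z]
    (B : Z →L[ℝ] Z →L[ℝ] ℝ) {c : ℝ} (hc : 0 ≤ c) (hs : ∀ u v, B u v = B v u)
    (hB : ∀ v, |B v v| ≤ c * ‖v‖ ^ 2) : ‖B‖ ≤ c := by
  refine B.opNorm_le_bound₂ hc fun u v => ?_
  rw [Real.norm_eq_abs]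
  by_cases hu : u = 0
  · simp [hu]
  by_cases hv : v = 0
  · simp [hv]
  have hu' : 0 < ‖u‖ := norm_pos_iff.2 hu
  have hv' : 0 < ‖v‖ := norm_pos_iff.2 hv
  have hp : ∀ x w : Z, |B x w| ≤ c / 2 * (‖x‖ ^ 2 + ‖w‖ ^ 2) := by
    intro x w
    have h1 := abs_le.1 (hB (x + w))
    have h2 := abs_le.1 (hB (x - w))
    have e1 : B (x + w) (x + w) = B x x + 2 * B x w + B w w := by
      simp only [map_add, add_apply]; rw [hs w x]; ring
    have e2 : B (x - w) (x - w) = B x x - 2 * B x w + B w w := by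
      simp only [map_sub, sub_apply]; rw [hs w x]; ring
    have h3 := parallelogram_law_with_norm ℝ x w
    have h4 : c * ‖x + w‖ ^ 2 + c * ‖x - w‖ ^ 2 = 2 * (c * (‖x‖ ^ 2 + ‖w‖ ^ 2)) := by
      linear_combination c * h3
    rw [abs_le]; constructor <;> linarith [h1.1, h1.2, h2.1, h2.2]
  have h := hp (‖v‖ • u) (‖u‖ • v)
  simp only [map_smul, smul_apply, smul_eq_mul, norm_smul, norm_norm, abs_mul, abs_norm] at h
  have hpos : 0 < ‖u‖ * ‖v‖ := by positivity
  refine le_of_mul_le_mul_left (a := ‖u‖ * ‖v‖) ?_ hpos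
  nlinarith

lemma subdiff_iff {R : V → ℝ} {ι : Z →L[ℝ] V} {ρ : ℝ} (hd : DenseRange (ι : Z → V))
    (hR : ∀ (c : ℝ) (v : V), 0 ≤ c → R (c • v) = c * R v)
    (hle : ∀ v : V, R v ≤ ρ * ‖v‖) (hRc : Continuous R)
    (D : Z →L[ℝ] ℝ) (u : Z) :
    (∃ ξ ∈ subdiff R (ι u), ξ.comp ι + D = 0) ↔
      (∀ v, (-D) v ≤ R (ι v)) ∧ (-D) u = R (ι u) := by
  have hR0 : R 0 = 0 := by simpa using hR 0 0 le_rfl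
  constructor
  · rintro ⟨ξ, hξ, he⟩
    have hev : ∀ v, (-D) v = ξ (ι v) := by
      intro v
      have := congrArg (fun f : Z →L[ℝ] ℝ => f v) he
      simp only [add_apply, ContinuousLinearMap.comp_apply, zero_apply] at this
      rw [neg_apply]; linarith
    have h1 := hξ 0
    have h2 := hξ ((2 : ℝ) • ι u)
    rw [zero_sub, map_neg, hR0] at h1
    rw [hR 2 _ (by norm_num), map_sub, map_smul, smul_eq_mul] at h2
    have heq : ξ (ι u) = R (ι u) := by linarith
    refine ⟨fun v => ?_, by rw [hev, heq]⟩
    have h3 := hξ (ι v)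
    rw [map_sub] at h3
    rw [hev]; linarith
  · rintro ⟨h1, h2⟩
    set η : Z →L[ℝ] ℝ := -D with hη
    have hb : ∀ x, ‖(η : Z →ₗ[ℝ] ℝ) x‖ ≤ ρ * ‖(ι : Z →ₗ[ℝ] V) x‖ := by
      intro x
      simp only [ContinuousLinearMap.coe_coe]
      rw [Real.norm_eq_abs, abs_le]
      have k1 := (h1 x).trans (hle _)
      have k2 := (h1 (-x)).trans (hle _)
      rw [map_neg, map_neg, norm_neg] at k2
      constructor <;> linarith
    set ξ := (η : Z →ₗ[ℝ] ℝ).extendOfNorm (ι : Z →ₗ[ℝ] V) with hξ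
    have hξe : ∀ x, ξ (ι x) = η x := fun x =>
      LinearMap.extendOfNorm_eq (f := (η : Z →ₗ[ℝ] ℝ)) (e := (ι : Z →ₗ[ℝ] V)) hd ⟨ρ, hb⟩ x
    have hξR : ∀ v, ξ v ≤ R v := by
      intro v
      refine hd.induction_on (p := fun v => ξ v ≤ R v) v
        (isClosed_le ξ.continuous hRc) fun x => ?_
      rw [hξe]; exact h1 x
    refine ⟨ξ, fun v => ?_, ?_⟩
    · rw [map_sub, hξe, h2]; linarith [hξR v]
    · ext x
      simp only [add_apply, ContinuousLinearMap.comp_apply, zero_apply, hξe]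
      simp [hη]

lemma make_setup
    (ι : Z →L[ℝ] V) (ιX : V →L[ℝ] X)
    (A : Z →L[ℝ] Z →L[ℝ] ℝ) (α : ℝ) (F : Z → ℝ) (DF : Z → V →L[ℝ] ℝ)
    (D2F : Z → Z →L[ℝ] V →L[ℝ] ℝ) (R : V → ℝ) (ℓ : ℝ → V →L[ℝ] ℝ) (L T : ℝ)
    (hstand : StandingAssumptions ι ιX A α F DF D2F R ℓ L T)
    (hC21 : ∀ r : ℝ, 0 < r → ∃ Cr : ℝ, 0 ≤ Cr ∧ ∀ z₁ z₂ v : Z,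
      ‖z₁‖ ≤ r → ‖z₂‖ ≤ r →
      D2F z₁ v (ι v) - D2F z₂ v (ι v) ≤ Cr * ‖z₁ - z₂‖ * ‖v‖ ^ 2)
    (κ : ℝ) (hconv : UniformlyConvex A D2F ι κ) :
    ∃ ρ : ℝ, (∀ v, R v ≤ ρ * ‖v‖) ∧ Continuous R ∧
      Setup (fun z => (1 / 2 : ℝ) * A z z + F z) (fun z => A z + (DF z).comp ι)
        (fun z => A + ((ContinuousLinearMap.compL ℝ Z V ℝ).flip ι).comp (D2F z))
        (fun t => (ℓ t).comp ι) (fun z => R (ι z)) κ L T ρ := by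
  obtain ⟨-, hd, hι, -, hA, -, -, -, hF, hDF, -, hL, hℓ, hT, hRcv, -, hR0, hRh, ρ₁, ρ, -, hρ, hRb⟩ :=
    hstand
  have hadd : ∀ u v, R (u + v) ≤ R u + R v := by
    intro u v
    have h := hRcv.2 (Set.mem_univ ((2 : ℝ) • u)) (Set.mem_univ ((2 : ℝ) • v))
      (by norm_num : (0 : ℝ) ≤ 1 / 2) (by norm_num : (0 : ℝ) ≤ 1 / 2) (by norm_num)
    simp only [smul_smul, smul_eq_mul] at h
    rw [hRh 2 u (by norm_num), hRh 2 v (by norm_num)] at h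
    norm_num at h
    linarith
  have hRc : Continuous R := by
    have : LipschitzWith (Real.toNNReal ρ) R := LipschitzWith.of_dist_le_mul fun u v => by
      rw [Real.dist_eq, dist_eq_norm, Real.coe_toNNReal ρ hρ.le]
      have h1 := hadd (u - v) v
      have h2 := hadd (v - u) u
      have h3 := (hRb (u - v)).2
      have h4 := (hRb (v - u)).2
      rw [norm_sub_rev] at h4
      simp only [sub_add_cancel] at h1 h2
      rw [abs_le]; constructor <;> linarith
    exact this.continuous
  have hE : ∀ z, HasFDerivAt (fun z => (1 / 2 : ℝ) * A z z + F z) (A z + (DF z).comp ι) z := by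
    intro z
    have h1 : HasFDerivAt (fun z => A z z) _ z := A.hasFDerivAt.clm_apply (hasFDerivAt_id z)
    have h2 := (h1.const_mul (1 / 2 : ℝ)).add (hF z)
    refine h2.congr_fderiv ?_
    ext v
    simp [hA v z]
    ring
  have hG : ∀ z, HasFDerivAt (fun z => A z + (DF z).comp ι)
      (A + ((ContinuousLinearMap.compL ℝ Z V ℝ).flip ι).comp (D2F z)) z := by
    intro z
    have h1 := (((ContinuousLinearMap.compL ℝ Z V ℝ).flip ι).hasFDerivAt (x := DF z)).comp z (hDF z)
    exact A.hasFDerivAt.add h1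
  have hH : ∀ z u v, (A + ((ContinuousLinearMap.compL ℝ Z V ℝ).flip ι).comp (D2F z)) u v =
      A u v + D2F z u (ι v) := fun z u v => rfl
  refine ⟨ρ, fun v => (hRb v).2, hRc, hE, hG, hconv.1, fun z v => ?_, fun r hr => ?_, hL, ?_, hT, ?_, ?_,
    fun v => hR0 _, hρ.le, ?_⟩
  · rw [hH]; exact hconv.2 z v
  · obtain ⟨C, hC, h⟩ := hC21 r hr
    refine ⟨C, hC, fun a b ha hb => ?_⟩
    refine polar_bound _ (by positivity) (fun u v => ?_) fun v => ?_
    · rw [sub_apply, sub_apply, sub_apply, sub_apply,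
        second_derivative_symmetric hE (hG a) u v, second_derivative_symmetric hE (hG b) u v]
    · rw [sub_apply, sub_apply, hH, hH]
      have h1 := h a b v ha hb
      have h2 := h b a v hb ha
      rw [norm_sub_rev b a] at h2
      rw [abs_le]; constructor <;> linarith
  · intro s hs t ht
    have h1 := hℓ.dist_le_mul s hs t ht
    rw [dist_eq_norm, Real.dist_eq, Real.coe_toNNReal L hL] at h1
    refine ContinuousLinearMap.opNorm_le_bound _ (by positivity) fun v => ?_
    have e : ((ℓ s).comp ι - (ℓ t).comp ι) v = (ℓ s - ℓ t) (ι v) := rfl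
    rw [e]
    refine ((ℓ s - ℓ t).le_opNorm _).trans ?_
    exact mul_le_mul h1 (hι v) (norm_nonneg _) (by positivity)
  · intro u v
    simp only [map_add]; exact hadd _ _
  · intro c v hc
    simp only [map_smul]; exact hRh _ _ hc
  · intro v
    exact (hRb _).2.trans (mul_le_mul_of_nonneg_left (hι v) hρ.le)

/-- Theorem B.1: if the energy `I` is `κ`-uniformly convex, then
the rate-independent system possesses a unique differential solution
`y ∈ W^{1,∞}(0,T;Z)` with `y(0) = z₀` and `0 ∈ ∂R(y′(t)) + D_zI(t,y(t))` a.e. -/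
theorem statement15
    (ι : Z →L[ℝ] V) (ιX : V →L[ℝ] X)
    (A : Z →L[ℝ] Z →L[ℝ] ℝ) (α : ℝ) (F : Z → ℝ) (DF : Z → V →L[ℝ] ℝ)
    (D2F : Z → Z →L[ℝ] V →L[ℝ] ℝ) (R : V → ℝ) (ℓ : ℝ → V →L[ℝ] ℝ) (L T : ℝ)
    (hstand : StandingAssumptions ι ιX A α F DF D2F R ℓ L T)
    (hC21 : ∀ r : ℝ, 0 < r → ∃ Cr : ℝ, 0 ≤ Cr ∧ ∀ z₁ z₂ v : Z,
      ‖z₁‖ ≤ r → ‖z₂‖ ≤ r →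
      D2F z₁ v (ι v) - D2F z₂ v (ι v) ≤ Cr * ‖z₁ - z₂‖ * ‖v‖ ^ 2)
    (κ : ℝ) (hconv : UniformlyConvex A D2F ι κ)
    (z₀ : Z) (hz₀ : LocStable R A DF ℓ ι 0 z₀) :
    ∃ y : ℝ → Z, IsDiffSolW1inf A DF ℓ R ι T z₀ y ∧
      ∀ y₂ : ℝ → Z, IsDiffSolW1inf A DF ℓ R ι T z₀ y₂ →
        ∀ s ∈ Set.Icc (0 : ℝ) T, y₂ s = y s := by
  obtain ⟨ρ, hρ, hRc, S⟩ := make_setup ι ιX A α F DF D2F R ℓ L T hstand hC21 κ hconv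
  obtain ⟨-, hd, -, -, -, -, -, -, -, -, -, -, -, hT, -, -, -, hRh, -⟩ := hstand
  have hneg : ∀ t z, -(DI A DF ℓ ι t z) = (ℓ t).comp ι - (A z + (DF z).comp ι) := by
    intro t z
    simp only [DI]; abel
  have hiff : ∀ t z u, (∃ ξ ∈ subdiff R (ι u), ξ.comp ι + DI A DF ℓ ι t z = 0) ↔
      (∀ v, ((ℓ t).comp ι - (A z + (DF z).comp ι)) v ≤ R (ι v)) ∧
        ((ℓ t).comp ι - (A z + (DF z).comp ι)) u = R (ι u) := by
    intro t z u
    rw [← hneg]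
    exact subdiff_iff hd hRh hρ hRc _ u
  have hz : ∀ v, ((ℓ 0).comp ι - (A z₀ + (DF z₀).comp ι)) v ≤ R (ι v) := by
    refine ((hiff 0 z₀ 0).1 ?_).1
    rw [map_zero]; exact hz₀
  obtain ⟨M, C, hM, hC, y, hy⟩ := S.exists_sol z₀ hz
  obtain ⟨g, hgb, hgi, hrep, hae⟩ := S.forward hM hy
  refine ⟨y, ⟨hy.init, g, ⟨M, hgb⟩, hgi, hrep, ?_⟩, ?_⟩
  · filter_upwards [hae] with s hs
    exact (hiff s (y s) (g s)).2 hs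
  · rintro y₂ ⟨-, g₂, ⟨Cb, hb₂⟩, hgi₂, hrep₂, hae₂⟩ s hs
    obtain ⟨M₂, C₂, hM₂, hC₂, hy₂⟩ := S.reverse hb₂ hgi₂ hrep₂ (by
      filter_upwards [hae₂] with s hs
      exact (hiff s (y₂ s) (g₂ s)).1 hs)
    obtain ⟨K, hK, h⟩ := S.compare z₀ (M := max M M₂) (C := max C C₂) (hM.trans (le_max_left _ _))
    have h1 := h 0 0 le_rfl le_rfl y₂ y (hy₂.weaken (le_max_right _ _) (le_max_right _ _))
      (hy.weaken (le_max_left _ _) (le_max_left _ _)) s hs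
    have h2 : ‖y₂ s - y s‖ = 0 := by
      rw [add_zero, mul_zero] at h1
      have := le_antisymm h1 (sq_nonneg _)
      exact pow_eq_zero_iff (two_ne_zero) |>.1 this
    exact sub_eq_zero.1 (norm_eq_zero.1 h2)

end RIS
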